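/- Fix an r-graph F and η₂ > 0. There exists n₀ > 0 such that for every n-vertex r-graph G with n > n₀: if G is F-free, then one can delete at most η₂·C(n, r) edges from G so that the resulting r-graph is F-hom-free. -/

import Mathlib

open Finset

/-- An `r`-graph: a set of edges each of which has exactly `r` vertices. -/
def IsRGraph {α : Type*} (r : ℕ) (G : Finset (Finset α)) : Prop :=
  ∀ e ∈ G, e.card = r

/-- `G` contains a (not necessarily induced) copy of `H`, i.e. a subgraph isomorphic to `H`. -/
def ContainsCopy {α β : Type*} [DecidableEq β]
    (H : Finset (Finset α)) (G : Finset (Finset β)) : Prop :=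
  ∃ f : α → β, Function.Injective f ∧ ∀ e ∈ H, e.image f ∈ G

/-- There is a homomorphism from `H` to `G`. -/
def ContainsHom {α β : Type*} [DecidableEq β]
    (H : Finset (Finset α)) (G : Finset (Finset β)) : Prop :=
  ∃ f : α → β, ∀ e ∈ H, e.image f ∈ G

/-- The Turán number `ex(n, H)` for `r`-graphs: the maximum number of edges in an
`n`-vertex `H`-free `r`-graph. -/
noncomputable def exNum {α : Type*} (r n : ℕ) (H : Finset (Finset α)) : ℕ :=
  sSup {m | ∃ G : Finset (Finset (Fin n)), IsRGraph r G ∧ ¬ ContainsCopy H G ∧ G.card = m}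

/-- The two endpoints of an edge of a simple graph, as a `Finset`. -/
def sym2ToFinset {α : Type*} [Fintype α] [DecidableEq α] (e : Sym2 α) : Finset α :=
  Finset.univ.filter (· ∈ e)

/-- The expansion `H_F^(r)` of a 2-graph `F`: each edge of `F` is enlarged with a new set of
`r - 2` vertices, distinct edges getting disjoint sets of new vertices. -/
def expansion {α : Type*} [Fintype α] [DecidableEq α] (r : ℕ)
    (F : SimpleGraph α) [DecidableRel F.Adj] :
    Finset (Finset (α ⊕ (F.edgeFinset × Fin (r - 2)))) :=
  F.edgeFinset.attach.image (fun e =>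
    (sym2ToFinset e.1).image Sum.inl ∪
      (Finset.univ : Finset (Fin (r - 2))).image (fun i => Sum.inr (e, i)))

/-- The complete balanced `l`-partite `r`-graph `T_r(n, l)` on vertex set `Fin n`,
with vertex classes the residue classes modulo `l` (which differ in size by at most 1):
its edges are all `r`-sets meeting each class in at most one vertex. -/
def turanGraph (r n l : ℕ) : Finset (Finset (Fin n)) :=
  (Finset.univ.powersetCard r).filter
    (fun e => ∀ u ∈ e, ∀ v ∈ e, (u : ℕ) % l = (v : ℕ) % l → u = v)

/-- `t_r(n, l)`, the number of edges of `T_r(n, l)`. -/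
def turanNum (r n l : ℕ) : ℕ := (turanGraph r n l).card

/-- Two `r`-graphs on `Fin n` are `ε`-close if some relabelling of the first one has
symmetric difference at most `ε·C(n,r)` with the second one. -/
def EpsClose (r n : ℕ) (ε : ℝ) (G₁ G₂ : Finset (Finset (Fin n))) : Prop :=
  ∃ σ : Fin n ≃ Fin n,
    ((((G₁.image fun e => e.image σ) \ G₂) ∪ (G₂ \ (G₁.image fun e => e.image σ))).card : ℝ)
      ≤ ε * (n.choose r)

/-- `G` contains a member of the decomposition family `𝓕_F` (w.r.t. proper `ℓ`-colourings of
`F`) as a subgraph, with all its vertices placed inside `S`.  A member of `𝓕_F` is obtained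
from `F` by deleting the vertices of `ℓ - 2` colour classes of a proper `ℓ`-colouring of `F`. -/
def ContainsDecompMemberOn {α β : Type*} [DecidableEq β] (ℓ : ℕ) (F : SimpleGraph α)
    (G : Finset (Finset β)) (S : Set β) : Prop :=
  ∃ c : α → Fin ℓ, (∀ ⦃u v⦄, F.Adj u v → c u ≠ c v) ∧
    ∃ i j : Fin ℓ, i ≠ j ∧
      ∃ f : {v : α // c v = i ∨ c v = j} → β, Function.Injective f ∧
        (∀ v, f v ∈ S) ∧
        ∀ u v : {v : α // c v = i ∨ c v = j}, F.Adj u.1 v.1 → ({f u, f v} : Finset β) ∈ G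

/-- `biex(n, F) = ex(n, 𝓕_F)`: the maximum number of edges in an `n`-vertex 2-graph containing
no member of the decomposition family of `F` (w.r.t. proper `ℓ`-colourings) as a subgraph. -/
noncomputable def biex {α : Type*} (ℓ : ℕ) (F : SimpleGraph α) (n : ℕ) : ℕ :=
  sSup {m | ∃ G : Finset (Finset (Fin n)), IsRGraph 2 G ∧
    ¬ ContainsDecompMemberOn ℓ F G Set.univ ∧ G.card = m}

/-- The Lagrangian of an `r`-graph `G`:
`λ(G) = max { Σ_{e ∈ G} Π_{i ∈ e} w i }` over all legal weightings `w`. -/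
noncomputable def lagrangian {α : Type*} [Fintype α] (G : Finset (Finset α)) : ℝ :=
  sSup {x : ℝ | ∃ w : α → ℝ, (∀ i, 0 ≤ w i) ∧ (∑ i, w i) = 1 ∧
    x = ∑ e ∈ G, ∏ i ∈ e, w i}

/-!
A homomorphism from `F` to an `F`-free graph is not injective, so only a vanishing proportion of
all maps from `V(F)` are homomorphisms, and the hypergraph removal lemma applies.

To prove the latter, suppose that for every `k` only a proportion `1 / (k + 1)` of the maps `V(F)
→ V(G k)` are homomorphisms, while `G k` cannot be made `F`-hom-free by deleting few edges. The
densities of sets of such maps converge along an ultrafilter to a measure on a Stone space, in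
which the sets of maps sending `e` to an edge, for `e ∈ F`, have a null intersection. It suffices
to replace each of them by a set which depends on the coordinates in `e` only, nearly contains it,
and comes from a sequence of sets on the finite levels, so that the new sets have no point in
common at all: on some level `k`, deleting the edges which come from maps outside the new sets
then destroys all homomorphisms.

The replacement is by induction on an order `j`, for sets generated by functions of fewer than `j`
of the coordinates in `e`. A set of order `j + 1` is determined up to a small error by colours of
the `j`-element faces of `e` and a set of order `j`. Conditionally on order `j` the colours of
distinct faces are independent, since averaging over the remaining coordinates shows that a
function of the coordinates in `e` is only correlated with the sets of lower order inside `e`.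
Hence it is enough to keep those points where the colours have positive conditional probability
and where the cell they define is nearly filled by the given set. These are conditions of order
`j`, to which the induction hypothesis applies.
-/

namespace HypergraphRemoval

open MeasureTheory Filter Topology
open scoped ENNReal ProbabilityTheory symmDiff BigOperators

universe u v

section LimitSpace

variable {X : Type*}

/-- The internal subset of the ultrafilter space determined by `S`: the closure of `S`, seen as a
set of principal ultrafilters. -/
def limitSet (S : Set X) : Set (Ultrafilter X) := {w | S ∈ w}

/-- The σ-algebra generated by the internal sets. -/
scoped instance limitMeasurableSpace : MeasurableSpace (Ultrafilter X) :=
  .generateFrom (Set.range limitSet)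

/-- A finitely additive probability on all subsets of `X`. -/
structure IsFinitelyAdditiveProb (m : Set X → ℝ) : Prop where
  nonneg : ∀ S, 0 ≤ m S
  univ : m Set.univ = 1
  union : ∀ S T, Disjoint S T → m (S ∪ T) = m S + m T

lemma pure_preimage_limitSet (S : Set X) : pure ⁻¹' limitSet S = S :=
  Set.ext fun _ => Ultrafilter.mem_pure

lemma limitSet_empty : limitSet (∅ : Set X) = ∅ :=
  Set.eq_empty_of_forall_notMem fun _ => Ultrafilter.empty_notMem

lemma limitSet_univ : limitSet (Set.univ : Set X) = Set.univ :=
  Set.eq_univ_of_forall fun _ => univ_mem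

lemma limitSet_compl (S : Set X) : limitSet Sᶜ = (limitSet S)ᶜ :=
  Set.ext fun _ => Ultrafilter.compl_mem_iff_notMem

lemma limitSet_inter (S T : Set X) : limitSet (S ∩ T) = limitSet S ∩ limitSet T :=
  Set.ext fun _ => inter_mem_iff

lemma limitSet_union (S T : Set X) : limitSet (S ∪ T) = limitSet S ∪ limitSet T :=
  Set.ext fun _ => Ultrafilter.union_mem_iff

lemma limitSet_iInter {ι : Type*} [Finite ι] (S : ι → Set X) :
    limitSet (⋂ i, S i) = ⋂ i, limitSet (S i) :=
  Set.ext fun _ => iInter_mem.trans (Set.mem_iInter (s := fun i => limitSet (S i))).symm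

lemma limitSet_biInter {ι : Type*} (s : Finset ι) (S : ι → Set X) :
    limitSet (⋂ i ∈ s, S i) = ⋂ i ∈ s, limitSet (S i) :=
  Set.ext fun _ => (biInter_finset_mem s).trans
    (Set.mem_iInter₂ (s := fun i _ => limitSet (S i))).symm

lemma limitSet_iUnion {ι : Type*} [Finite ι] (S : ι → Set X) :
    limitSet (⋃ i, S i) = ⋃ i, limitSet (S i) := by
  rw [← compl_inj_iff, ← limitSet_compl, Set.compl_iUnion, Set.compl_iUnion, limitSet_iInter]
  simp only [limitSet_compl]

lemma limitSet_mono {S T : Set X} (h : S ⊆ T) : limitSet S ⊆ limitSet T :=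
  fun _ hw => mem_of_superset hw h

lemma measurableSet_limitSet (S : Set X) : MeasurableSet (limitSet S) :=
  MeasurableSpace.measurableSet_generateFrom ⟨S, rfl⟩

lemma isSetAlgebra_limitSet_image {𝒜 : Set (Set X)} (h𝒜 : IsSetAlgebra 𝒜) :
    IsSetAlgebra (limitSet '' 𝒜) where
  empty_mem := ⟨∅, h𝒜.empty_mem, limitSet_empty⟩
  compl_mem := by
    rintro _ ⟨S, hS, rfl⟩
    exact ⟨Sᶜ, h𝒜.compl_mem hS, limitSet_compl S⟩
  union_mem := by
    rintro _ _ ⟨S, hS, rfl⟩ ⟨T, hT, rfl⟩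
    exact ⟨S ∪ T, h𝒜.union_mem hS hT, limitSet_union S T⟩

lemma isSetAlgebra_range_limitSet : IsSetAlgebra (Set.range (limitSet (X := X))) :=
  Set.image_univ (f := limitSet (X := X)) ▸
    isSetAlgebra_limitSet_image ⟨trivial, fun _ _ => trivial, fun _ _ _ _ => trivial⟩

lemma exists_finset_limitSet_subset_biUnion {ι : Type*} {S : Set X} {T : ι → Set X}
    (h : limitSet S ⊆ ⋃ i, limitSet (T i)) : ∃ t : Finset ι, limitSet S ⊆ ⋃ i ∈ t, limitSet (T i) :=
  (ultrafilter_isClosed_basic S).isCompact.elim_finite_subcover _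
    (fun i => ultrafilter_isOpen_basic (T i)) h

lemma exists_limitSet_measure_symmDiff_lt {𝒜 : Set (Set X)} (h𝒜 : IsSetAlgebra 𝒜)
    (μ : Measure (Ultrafilter X)) [IsFiniteMeasure μ] {A : Set (Ultrafilter X)}
    (hA : MeasurableSet[.generateFrom (limitSet '' 𝒜)] A) {δ : ℝ≥0∞} (hδ : 0 < δ) :
    ∃ S ∈ 𝒜, μ (limitSet S ∆ A) < δ := by
  have hle : MeasurableSpace.generateFrom (limitSet '' 𝒜) ≤ limitMeasurableSpace :=
    MeasurableSpace.generateFrom_mono (Set.image_subset_range _ _)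
  have halg := isSetAlgebra_limitSet_image h𝒜
  obtain ⟨_, ⟨S, hS, rfl⟩, h⟩ :=
    @exists_measure_symmDiff_lt_of_generateFrom_isSetRing _ (.generateFrom (limitSet '' 𝒜))
      (μ.trim hle) _ _ halg.isSetRing
      ⟨{Set.univ}, Set.countable_singleton _, Set.singleton_subset_iff.2 halg.univ_mem, by simp⟩
      rfl A hA δ hδ
  have hS' : MeasurableSet[.generateFrom (limitSet '' 𝒜)] (limitSet S) :=
    MeasurableSpace.measurableSet_generateFrom ⟨S, hS, rfl⟩
  exact ⟨S, hS, trim_measurableSet_eq hle (hS'.symmDiff hA) ▸ h⟩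

namespace IsFinitelyAdditiveProb

variable {m : Set X → ℝ}

lemma empty (hm : IsFinitelyAdditiveProb m) : m ∅ = 0 := by
  simpa using hm.union ∅ ∅ (Set.disjoint_empty ∅)

lemma le_one (hm : IsFinitelyAdditiveProb m) (S : Set X) : m S ≤ 1 := by
  have h := hm.union S Sᶜ disjoint_compl_right
  rw [Set.union_compl_self, hm.univ] at h
  linarith [hm.nonneg Sᶜ]

/-- The content induced on internal sets by a finitely additive probability. -/
noncomputable def content (hm : IsFinitelyAdditiveProb m) :
    AddContent ℝ≥0∞ (Set.range (limitSet (X := X))) :=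
  isSetAlgebra_range_limitSet.isSetRing.addContent_of_union
    (fun E => ENNReal.ofReal (m (pure ⁻¹' E)))
    (by simp [hm.empty])
    (fun _ _ hd => by
      rw [Set.preimage_union, hm.union _ _ (hd.preimage pure),
        ENNReal.ofReal_add (hm.nonneg _) (hm.nonneg _)])

lemma content_limitSet (hm : IsFinitelyAdditiveProb m) (S : Set X) :
    hm.content (limitSet S) = ENNReal.ofReal (m S) :=
  congrArg (fun S => ENNReal.ofReal (m S)) (pure_preimage_limitSet S)

lemma content_isSigmaSubadditive (hm : IsFinitelyAdditiveProb m) :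
    hm.content.IsSigmaSubadditive := by
  intro E hE hU
  choose T hT using hE
  obtain ⟨S, hS⟩ := hU
  simp only [← hT] at hS ⊢
  obtain ⟨t, ht⟩ := exists_finset_limitSet_subset_biUnion hS.subset
  have hring := (isSetAlgebra_range_limitSet (X := X)).isSetRing
  have hTmem : ∀ i, limitSet (T i) ∈ Set.range (limitSet (X := X)) := fun i => ⟨T i, rfl⟩
  calc hm.content (⋃ i, limitSet (T i))
      ≤ hm.content (⋃ i ∈ t, limitSet (T i)) :=
        addContent_mono hring.isSetSemiring ⟨S, hS⟩ (hring.biUnion_mem t fun i _ => hTmem i)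
          (hS ▸ ht)
    _ ≤ ∑ i ∈ t, hm.content (limitSet (T i)) := addContent_biUnion_le hring fun i _ => hTmem i
    _ ≤ ∑' i, hm.content (limitSet (T i)) := ENNReal.sum_le_tsum t

theorem exists_measure (hm : IsFinitelyAdditiveProb m) :
    ∃ μ : Measure (Ultrafilter X), IsProbabilityMeasure μ ∧ ∀ S, μ.real (limitSet S) = m S := by
  have hring := (isSetAlgebra_range_limitSet (X := X)).isSetRing.isSetSemiring
  let μ := hm.content.measure hring le_rfl hm.content_isSigmaSubadditive
  have hμ (S : Set X) : μ (limitSet S) = ENNReal.ofReal (m S) :=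
    (hm.content.measure_eq hring rfl hm.content_isSigmaSubadditive ⟨S, rfl⟩).trans
      (hm.content_limitSet S)
  refine ⟨μ, ⟨?_⟩, fun S => ?_⟩
  · rw [← limitSet_univ, hμ, hm.univ, ENNReal.ofReal_one]
  · rw [Measure.real, hμ, ENNReal.toReal_ofReal (hm.nonneg S)]

end IsFinitelyAdditiveProb

/-- `μ` gives internal sets the ultralimits along `U` of the values of the set functions `d i`. -/
def IsLimitMeasure {I : Type*} (U : Ultrafilter I) (d : I → Set X → ℝ)
    (μ : Measure (Ultrafilter X)) : Prop :=
  ∀ S, Tendsto (fun i => d i S) U (𝓝 (μ.real (limitSet S)))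

theorem exists_isLimitMeasure {I : Type*} (U : Ultrafilter I) {d : I → Set X → ℝ}
    (hd : ∀ i, IsFinitelyAdditiveProb (d i)) :
    ∃ μ : Measure (Ultrafilter X), IsProbabilityMeasure μ ∧ IsLimitMeasure U d μ := by
  have hlim (S : Set X) : ∃ l, Tendsto (fun i => d i S) U (𝓝 l) := by
    obtain ⟨l, -, hl⟩ := (isCompact_Icc (a := (0 : ℝ)) (b := 1)).ultrafilter_le_nhds
      (U.map fun i => d i S) (le_principal_iff.2 <| mem_map.2 <|
        univ_mem' fun i => ⟨(hd i).nonneg S, (hd i).le_one S⟩)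
    exact ⟨l, hl⟩
  choose m hm using hlim
  have hprob : IsFinitelyAdditiveProb m :=
    { nonneg := fun S => ge_of_tendsto' (hm S) fun i => (hd i).nonneg S
      univ := tendsto_nhds_unique (hm Set.univ) (by simp [(hd _).univ])
      union := fun S T hST => tendsto_nhds_unique (hm (S ∪ T)) <| by
        simpa only [(hd _).union S T hST] using (hm S).add (hm T) }
  obtain ⟨μ, hμ, h⟩ := hprob.exists_measure
  exact ⟨μ, hμ, fun S => (h S).symm ▸ hm S⟩

end LimitSpace

section CondProb

variable {Ω : Type*} {m m' m₀ : MeasurableSpace Ω} {μ : Measure[m₀] Ω}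

lemma setIntegral_eq_zero_of_isSetAlgebra {𝒜 : Set (Set Ω)} (h𝒜 : IsSetAlgebra 𝒜)
    (hle : MeasurableSpace.generateFrom 𝒜 ≤ m₀) {f : Ω → ℝ} (hf : Integrable f μ)
    (h : ∀ E ∈ 𝒜, ∫ w in E, f w ∂μ = 0) {E : Set Ω}
    (hE : MeasurableSet[.generateFrom 𝒜] E) : ∫ w in E, f w ∂μ = 0 := by
  induction E, hE using MeasurableSpace.induction_on_inter rfl
    h𝒜.isSetRing.isSetSemiring.isPiSystem with
  | empty => exact setIntegral_empty
  | basic E hE => exact h E hE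
  | compl E hE ih =>
    have huniv := h _ h𝒜.univ_mem
    rw [setIntegral_univ] at huniv
    rw [setIntegral_compl (hle _ hE) hf, ih, huniv, sub_zero]
  | iUnion E hd hE ih =>
    rw [integral_iUnion (fun i => hle _ (hE i)) hd hf.integrableOn]
    simp only [ih, tsum_zero]

lemma setIntegral_condProb [IsFiniteMeasure μ] (hm : m ≤ m₀) {A E : Set Ω}
    (hA : MeasurableSet[m₀] A) (hE : MeasurableSet[m] E) :
    ∫ w in E, (μ⟦A | m⟧) w ∂μ = μ.real (A ∩ E) := by
  rw [setIntegral_condExp hm ((integrable_const 1).indicator hA) hE]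
  exact (integral_indicator_one hA).trans (measureReal_restrict_apply hA)

lemma condProb_nonneg (A : Set Ω) : 0 ≤ᵐ[μ] μ⟦A | m⟧ :=
  condExp_nonneg <| ae_of_all _ <| Set.indicator_nonneg fun _ _ => zero_le_one

lemma condProb_inter_of_condProb_eq [IsFiniteMeasure μ] (hmm' : m ≤ m') (hm' : m' ≤ m₀)
    {X D : Set Ω} (hX : MeasurableSet[m'] X) (hD : MeasurableSet[m₀] D)
    (h : μ⟦D | m'⟧ =ᵐ[μ] μ⟦D | m⟧) : μ⟦X ∩ D | m⟧ =ᵐ[μ] μ⟦X | m⟧ * μ⟦D | m⟧ := by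
  have hXi : Integrable (X.indicator fun _ => (1 : ℝ)) μ :=
    (integrable_const 1).indicator (hm' _ hX)
  have hDi : Integrable (D.indicator fun _ => (1 : ℝ)) μ := (integrable_const 1).indicator hD
  have hmul (f : Ω → ℝ) : X.indicator f = (X.indicator fun _ => 1) * f := by
    ext w; by_cases hw : w ∈ X <;> simp [hw]
  have hint : Integrable ((X.indicator fun _ => (1 : ℝ)) * μ⟦D | m⟧) μ :=
    hmul (μ⟦D | m⟧) ▸ integrable_condExp.indicator (hm' _ hX)
  calc μ⟦X ∩ D | m⟧
      =ᵐ[μ] μ[μ⟦X ∩ D | m'⟧|m] := (condExp_condExp_of_le hmm' hm').symm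
    _ =ᵐ[μ] μ[(X.indicator fun _ => (1 : ℝ)) * μ⟦D | m⟧|m] := by
        refine condExp_congr_ae ?_
        rw [← Set.indicator_indicator, ← hmul]
        filter_upwards [condExp_indicator hDi hX, h] with w hw hDw
        rw [hw, Set.indicator, Set.indicator, hDw]
    _ =ᵐ[μ] μ⟦X | m⟧ * μ⟦D | m⟧ :=
        condExp_mul_of_stronglyMeasurable_right stronglyMeasurable_condExp hint hXi

lemma condProb_le_sum_condProb_sdiff [IsFiniteMeasure μ] {ι : Type*} [Fintype ι] {P : Set Ω}
    {A : ι → Set Ω} (hP : MeasurableSet[m₀] P) (hA : ∀ i, MeasurableSet[m₀] (A i))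
    (h0 : μ (⋂ i, A i) = 0) : μ⟦P | m⟧ ≤ᵐ[μ] ∑ i, μ⟦P \ A i | m⟧ := by
  have hint (i : ι) : Integrable ((P \ A i).indicator fun _ => (1 : ℝ)) μ :=
    (integrable_const 1).indicator (hP.diff (hA i))
  refine (condExp_mono ((integrable_const 1).indicator hP)
    (integrable_finsetSum' _ fun i _ => hint i) ?_).trans_eq
    (condExp_finsetSum (fun i _ => hint i) m)
  filter_upwards [measure_eq_zero_iff_ae_notMem.1 h0] with w hw
  obtain ⟨i, hi⟩ := not_forall.1 (mt Set.mem_iInter.2 hw)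
  have hle : P.indicator (fun _ => (1 : ℝ)) w ≤ (P \ A i).indicator (fun _ => 1) w := by
    by_cases hwP : w ∈ P <;> simp [hwP, hi]
  rw [Finset.sum_apply]
  exact hle.trans (Finset.single_le_sum (f := fun i => (P \ A i).indicator (fun _ => (1 : ℝ)) w)
    (fun i _ => Set.indicator_nonneg (fun _ _ => zero_le_one) w) (Finset.mem_univ i))

lemma measureReal_sdiff_condProb_pos [IsFiniteMeasure μ] (hm : m ≤ m₀) {A : Set Ω}
    (hA : MeasurableSet[m₀] A) : μ.real (A \ {w | 0 < (μ⟦A | m⟧) w}) = 0 := by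
  have hE : MeasurableSet[m] {w | (μ⟦A | m⟧) w ≤ 0} :=
    measurableSet_le stronglyMeasurable_condExp.measurable (@measurable_const _ _ _ m _)
  have hdiff : A \ {w | 0 < (μ⟦A | m⟧) w} = A ∩ {w | (μ⟦A | m⟧) w ≤ 0} := by
    ext w; simp only [Set.mem_sdiff, Set.mem_inter_iff, Set.mem_ofPred_eq, not_lt]
  rw [hdiff, ← setIntegral_condProb hm hA hE]
  refine le_antisymm (setIntegral_nonpos (hm _ hE) fun w hw => hw) ?_
  rw [setIntegral_condProb hm hA hE]
  exact measureReal_nonneg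

/-- The points at which `A` fills the cell `P` up to a proportion `c`, conditionally on `m`. -/
def regularSet (μ : Measure[m₀] Ω) (m : MeasurableSpace Ω) (c : ℝ) (P A : Set Ω) : Set Ω :=
  {w | (μ⟦P \ A | m⟧) w ≤ c * (μ⟦P | m⟧) w}

lemma measurableSet_regularSet (c : ℝ) (P A : Set Ω) :
    MeasurableSet[m] (regularSet μ m c P A) :=
  measurableSet_le stronglyMeasurable_condExp.measurable
    (stronglyMeasurable_condExp.measurable.const_mul c)

lemma mul_measureReal_inter_sdiff_regularSet_le [IsFiniteMeasure μ] (hm : m ≤ m₀) {c : ℝ}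
    {P A R : Set Ω} (hP : MeasurableSet[m₀] P) (hA : MeasurableSet[m₀] A)
    (hR : MeasurableSet[m] R) :
    c * μ.real ((P ∩ R) \ regularSet μ m c P A) ≤ μ.real ((P ∩ R) \ A) := by
  set E := R \ regularSet μ m c P A
  have hE : MeasurableSet[m] E := hR.diff (measurableSet_regularSet c P A)
  calc c * μ.real ((P ∩ R) \ regularSet μ m c P A)
      = ∫ w in E, c * (μ⟦P | m⟧) w ∂μ := by
        rw [integral_const_mul, setIntegral_condProb hm hP hE, Set.inter_sdiff_assoc]
    _ ≤ ∫ w in E, (μ⟦P \ A | m⟧) w ∂μ :=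
        setIntegral_mono_on (integrable_condExp.const_mul c).integrableOn
          integrable_condExp.integrableOn (hm _ hE) fun w hw => (not_le.1 hw.2).le
    _ = μ.real ((P \ A) ∩ E) := setIntegral_condProb hm (hP.diff hA) hE
    _ ≤ μ.real ((P ∩ R) \ A) := measureReal_mono fun w hw => ⟨⟨hw.1.1, hw.2.1⟩, hw.1.2⟩

lemma mul_measureReal_iUnion_sdiff_regularSet_le [IsFiniteMeasure μ] {T : Type*} [Finite T]
    (hm : m ≤ m₀) {c : ℝ} (hc : 0 ≤ c) {P R : T → Set Ω} {A : Set Ω}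
    (hP : ∀ τ, MeasurableSet[m₀] (P τ)) (hPd : Pairwise (Function.onFun Disjoint P))
    (hA : MeasurableSet[m₀] A) (hR : ∀ τ, MeasurableSet[m] (R τ)) :
    c * μ.real (⋃ τ, (P τ ∩ R τ) \ regularSet μ m c (P τ) A) ≤
      μ.real ((⋃ τ, P τ ∩ R τ) \ A) := by
  have := Fintype.ofFinite T
  calc c * μ.real (⋃ τ, (P τ ∩ R τ) \ regularSet μ m c (P τ) A)
      ≤ ∑ τ, c * μ.real ((P τ ∩ R τ) \ regularSet μ m c (P τ) A) := by
        rw [← Finset.mul_sum]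
        exact mul_le_mul_of_nonneg_left (measureReal_iUnion_fintype_le _) hc
    _ ≤ ∑ τ, μ.real ((P τ ∩ R τ) \ A) := Finset.sum_le_sum fun τ _ =>
        mul_measureReal_inter_sdiff_regularSet_le hm (hP τ) hA (hR τ)
    _ = μ.real ((⋃ τ, P τ ∩ R τ) \ A) := by
        rw [Set.iUnion_sdiff, measureReal_iUnion_fintype]
        · exact fun τ τ' h => (hPd h).mono
            (Set.sdiff_subset.trans Set.inter_subset_left)
            (Set.sdiff_subset.trans Set.inter_subset_left)
        · exact fun τ => ((hP τ).inter (hm _ (hR τ))).diff hA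

end CondProb

section Samples

variable {V I κ : Type*} {W : I → Type*}

/-- The maps from `V` to one of the finite vertex sets `W i`. -/
abbrev Sample (V : Type*) {I : Type*} (W : I → Type*) := Σ i, V → W i

/-- On each level, `f` is a function of the coordinates in `K`. A set `S` depends only on these
coordinates when `f` is `(· ∈ S)`. -/
def DependsOnCoords (K : Finset V) (f : Sample V W → κ) : Prop :=
  ∀ i, DependsOn (fun x => f ⟨i, x⟩) K

lemma DependsOnCoords.mono {K L : Finset V} {f : Sample V W → κ} (hf : DependsOnCoords K f)
    (h : K ⊆ L) : DependsOnCoords L f :=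
  fun i _ _ hxy => hf i fun v hv => hxy v (h hv)

/-- The algebra of sets generated by the sets depending only on the coordinates in some member
of `𝒦`. -/
def coordAlgebra (𝒦 : Set (Finset V)) : Set (Set (Sample V W)) :=
  generateSetAlgebra {S | ∃ K ∈ 𝒦, DependsOnCoords K (· ∈ S)}

/-- The σ-algebra generated by the internal sets coming from `coordAlgebra 𝒦`. -/
abbrev coordSigma (W : I → Type*) (𝒦 : Set (Finset V)) :
    MeasurableSpace (Ultrafilter (Sample V W)) :=
  .generateFrom (limitSet '' coordAlgebra 𝒦)

lemma isSetAlgebra_coordAlgebra (𝒦 : Set (Finset V)) :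
    IsSetAlgebra (coordAlgebra (W := W) 𝒦) :=
  isSetAlgebra_generateSetAlgebra

lemma DependsOnCoords.mem_coordAlgebra {𝒦 : Set (Finset V)} {K : Finset V}
    {S : Set (Sample V W)} (hS : DependsOnCoords K (· ∈ S)) (hK : K ∈ 𝒦) : S ∈ coordAlgebra 𝒦 :=
  .base S ⟨K, hK, hS⟩

lemma coordAlgebra_mono {𝒦 ℒ : Set (Finset V)} (h : ∀ K ∈ 𝒦, ∃ L ∈ ℒ, K ⊆ L) :
    coordAlgebra (W := W) 𝒦 ⊆ coordAlgebra ℒ := by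
  refine IsSetAlgebra.generateSetAlgebra_subset ?_ (isSetAlgebra_coordAlgebra ℒ)
  rintro S ⟨K, hK, hS⟩
  obtain ⟨L, hL, hKL⟩ := h K hK
  exact (hS.mono hKL).mem_coordAlgebra hL

lemma dependsOnCoords_of_mem_coordAlgebra_singleton {e : Finset V} {S : Set (Sample V W)}
    (hS : S ∈ coordAlgebra {e}) : DependsOnCoords e (· ∈ S) := by
  induction hS with
  | base S hS =>
    obtain ⟨_, rfl, hS⟩ := hS
    exact hS
  | empty => exact fun _ _ _ _ => rfl
  | compl S _ ih => exact fun i _ _ h => congrArg Not (ih i h)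
  | union S T _ _ ihS ihT => exact fun i _ _ h => congrArg₂ Or (ihS i h) (ihT i h)

lemma coordSigma_le (𝒦 : Set (Finset V)) : coordSigma W 𝒦 ≤ limitMeasurableSpace :=
  MeasurableSpace.generateFrom_mono (Set.image_subset_range _ _)

lemma coordSigma_mono {𝒦 ℒ : Set (Finset V)} (h : ∀ K ∈ 𝒦, ∃ L ∈ ℒ, K ⊆ L) :
    coordSigma W 𝒦 ≤ coordSigma W ℒ :=
  MeasurableSpace.generateFrom_mono (Set.image_mono (coordAlgebra_mono h))

lemma measurableSet_coordSigma_limitSet {𝒦 : Set (Finset V)} {S : Set (Sample V W)}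
    (hS : S ∈ coordAlgebra 𝒦) : MeasurableSet[coordSigma W 𝒦] (limitSet S) :=
  MeasurableSpace.measurableSet_generateFrom ⟨S, hS, rfl⟩

lemma DependsOnCoords.measurableSet_limitSet {K : Finset V} {S : Set (Sample V W)}
    (hS : DependsOnCoords K (· ∈ S)) : MeasurableSet[coordSigma W {K}] (limitSet S) :=
  measurableSet_coordSigma_limitSet (hS.mem_coordAlgebra rfl)

/-- The faces of `e` with fewer than `j` vertices. -/
def skeleton (e : Finset V) (j : ℕ) : Set (Finset V) := {K | K ⊆ e ∧ #K < j}

lemma isLowerSet_skeleton (e : Finset V) (j : ℕ) : IsLowerSet (skeleton e j) :=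
  fun _ _ hKL hK => ⟨hKL.trans hK.1, (card_le_card hKL).trans_lt hK.2⟩

lemma coordSigma_skeleton_le (W : I → Type*) (e : Finset V) (j : ℕ) :
    coordSigma W (skeleton e j) ≤ coordSigma W {e} :=
  coordSigma_mono fun _ hK => ⟨e, rfl, hK.1⟩

variable [DecidableEq V]

/-- The section of `S` obtained by fixing the coordinates outside `e` to those of `y`. -/
def slice (e : Finset V) (y : ∀ i, V → W i) (S : Set (Sample V W)) : Set (Sample V W) :=
  {z | ⟨z.1, e.piecewise z.2 (y z.1)⟩ ∈ S}

lemma slice_mem_coordAlgebra {𝒦 ℒ : Set (Finset V)} {e : Finset V} (h : ∀ K ∈ 𝒦, K ∩ e ∈ ℒ)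
    (y : ∀ i, V → W i) {S : Set (Sample V W)} (hS : S ∈ coordAlgebra 𝒦) :
    slice e y S ∈ coordAlgebra ℒ := by
  induction hS with
  | base S hS =>
    obtain ⟨K, hK, hS⟩ := hS
    refine DependsOnCoords.mem_coordAlgebra (fun i x x' hxx' => hS i fun v hv => ?_) (h K hK)
    by_cases hve : v ∈ e
    · simpa [hve] using hxx' v (by simpa [hve] using hv)
    · simp [hve]
  | empty => exact .empty
  | compl S _ ih => exact .compl _ ih
  | union S T _ _ ihS ihT => exact .union _ _ ihS ihT

variable [Fintype V] [∀ i, Fintype (W i)]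

/-- The average of `h` over the `i`-th level. -/
noncomputable def levelMean (h : Sample V W → ℝ) (i : I) : ℝ := 𝔼 x : V → W i, h ⟨i, x⟩

/-- The proportion of the `i`-th level contained in `S`. -/
noncomputable def density (i : I) (S : Set (Sample V W)) : ℝ :=
  levelMean (S.indicator fun _ => 1) i

lemma levelMean_indicator_const (S : Set (Sample V W)) (c : ℝ) (i : I) :
    levelMean (S.indicator fun _ => c) i = c * density i S := by
  simp only [levelMean, density, mul_expect, ← Set.indicator_const_mul, mul_one]

lemma levelMean_indicator_add (S : Set (Sample V W)) (f g : Sample V W → ℝ) (i : I) :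
    levelMean (S.indicator (f + g)) i =
      levelMean (S.indicator f) i + levelMean (S.indicator g) i := by
  simp only [levelMean, Set.indicator_add', Pi.add_apply, expect_add_distrib]

lemma isFinitelyAdditiveProb_density [∀ i, Nonempty (W i)] (i : I) :
    IsFinitelyAdditiveProb (density (V := V) (W := W) i) where
  nonneg S := expect_nonneg fun x _ => Set.indicator_nonneg (fun _ _ => zero_le_one) _
  univ := by simp only [density, levelMean, Set.indicator_univ, Fintype.expect_const]
  union S T hST := by
    simp only [density, levelMean, Set.indicator_union_of_disjoint hST, expect_add_distrib]

lemma expect_expect_piecewise {β : Type*} [Fintype β] [Nonempty β] (e : Finset V)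
    (φ : (V → β) → ℝ) : 𝔼 y : V → β, 𝔼 x : V → β, φ (e.piecewise x y) = 𝔼 x, φ x := by
  have hswap : Function.Involutive fun p : (V → β) × (V → β) =>
      (e.piecewise p.2 p.1, e.piecewise p.1 p.2) := by
    rintro ⟨x, y⟩
    ext v <;> by_cases hv : v ∈ e <;> simp [hv]
  calc 𝔼 y : V → β, 𝔼 x : V → β, φ (e.piecewise x y)
      = 𝔼 p : (V → β) × (V → β), φ (e.piecewise p.2 p.1) :=
        (expect_product' univ univ fun y x => φ (e.piecewise x y)).symm
    _ = 𝔼 p : (V → β) × (V → β), φ p.1 :=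
        Fintype.expect_bijective _ hswap.bijective _ _ fun _ => rfl
    _ = 𝔼 x, φ x := by
        rw [← univ_product_univ, expect_product' univ univ fun x _ => φ x]
        simp only [Fintype.expect_const]

lemma exists_abs_levelMean_indicator_le_slice [∀ i, Nonempty (W i)] {e : Finset V}
    {h : Sample V W → ℝ} (hh : DependsOnCoords e h) (S : Set (Sample V W)) :
    ∃ y : ∀ i, V → W i, ∀ i,
      |levelMean (S.indicator h) i| ≤ |levelMean ((slice e y S).indicator h) i| := by
  have hlevel (i : I) : ∃ y : V → W i, |levelMean (S.indicator h) i| ≤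
      |𝔼 x : V → W i, S.indicator h ⟨i, e.piecewise x y⟩| := by
    have havg := expect_expect_piecewise e fun x : V → W i => S.indicator h ⟨i, x⟩
    obtain ⟨y, -, hy⟩ := exists_le_of_le_expect univ_nonempty
      ((congrArg abs havg).ge.trans (abs_expect_le univ _))
    exact ⟨y, hy⟩
  choose y hy using hlevel
  refine ⟨y, fun i => (hy i).trans_eq (congrArg abs (expect_congr rfl fun x _ => ?_))⟩
  have hpiecewise : h ⟨i, e.piecewise x (y i)⟩ = h ⟨i, x⟩ :=
    hh i fun v hv => e.piecewise_eq_of_mem _ _ hv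
  classical
  simp only [Set.indicator_apply, slice, Set.mem_ofPred_eq, hpiecewise]

end Samples

section Representable

variable {V I : Type*} {W : I → Type*} {U : Ultrafilter I}
  {μ : Measure (Ultrafilter (Sample V W))} {e : Finset V}

lemma exists_eLpNorm_indicator_sub_limitSet_le [IsFiniteMeasure μ] (c : ℝ)
    {A : Set (Ultrafilter (Sample V W))} (hA : MeasurableSet[coordSigma W {e}] A)
    {ε : ℝ≥0∞} (hε : ε ≠ 0) :
    ∃ S, DependsOnCoords e (· ∈ S) ∧
      eLpNorm ((limitSet S).indicator (fun _ => c) - A.indicator fun _ => c) 1 μ ≤ ε := by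
  obtain ⟨δ, hδ, hsmall⟩ := exists_eLpNorm_indicator_le (μ := μ) ENNReal.one_ne_top c hε
  obtain ⟨S, hS, hSA⟩ := exists_limitSet_measure_symmDiff_lt (isSetAlgebra_coordAlgebra {e}) μ hA
    (ENNReal.coe_pos.2 hδ)
  refine ⟨S, dependsOnCoords_of_mem_coordAlgebra_singleton hS, ?_⟩
  rw [eLpNorm_indicator_sub_indicator]
  exact hsmall _ hSA.le

variable [Fintype V] [DecidableEq V] [∀ i, Fintype (W i)]

/-- `g` is the limit of a function of the coordinates in `e`, in the sense that its integrals over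
internal sets are the limits of the corresponding averages. -/
structure IsRepresentable (U : Ultrafilter I) (μ : Measure (Ultrafilter (Sample V W)))
    (e : Finset V) (g : Ultrafilter (Sample V W) → ℝ) : Prop where
  stronglyMeasurable : StronglyMeasurable[coordSigma W {e}] g
  integrable : Integrable g μ
  exists_tendsto : ∃ h : Sample V W → ℝ, DependsOnCoords e h ∧ ∀ S,
    Tendsto (levelMean (S.indicator h)) U (𝓝 (∫ w in limitSet S, g w ∂μ))

lemma IsRepresentable.add {f g : Ultrafilter (Sample V W) → ℝ} (hf : IsRepresentable U μ e f)
    (hg : IsRepresentable U μ e g) : IsRepresentable U μ e (f + g) := by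
  obtain ⟨hfm, hfi, f', hf', hflim⟩ := hf
  obtain ⟨hgm, hgi, g', hg', hglim⟩ := hg
  refine ⟨hfm.add hgm, hfi.add hgi, f' + g',
    fun i _ _ h => congrArg₂ (· + ·) (hf' i h) (hg' i h), fun S => ?_⟩
  rw [integral_add' hfi.integrableOn hgi.integrableOn,
    funext (levelMean_indicator_add S f' g')]
  exact (hflim S).add (hglim S)

variable [IsFiniteMeasure μ]

lemma IsRepresentable.indicator_const (hU : IsLimitMeasure U density μ) {R : Set (Sample V W)}
    (hR : DependsOnCoords e (· ∈ R)) (c : ℝ) :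
    IsRepresentable U μ e ((limitSet R).indicator fun _ => c) := by
  refine ⟨stronglyMeasurable_const.indicator hR.measurableSet_limitSet,
    (integrable_const c).indicator (measurableSet_limitSet R), R.indicator fun _ => c,
    fun i x y h => ?_, fun S => ?_⟩
  · classical
    simp only [Set.indicator_apply, hR i h]
  · have hlevel : levelMean (S.indicator (R.indicator fun _ => c)) =
        fun i => c * density i (S ∩ R) := by
      rw [Set.indicator_indicator]
      exact funext (levelMean_indicator_const (S ∩ R) c)
    rw [hlevel, setIntegral_indicator (measurableSet_limitSet R), ← limitSet_inter,
      setIntegral_const, smul_eq_mul, mul_comm]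
    exact (hU (S ∩ R)).const_mul c

lemma IsRepresentable.exists_integral_abs_sub_le (hU : IsLimitMeasure U density μ)
    {f : Ultrafilter (Sample V W) → ℝ} (hf : StronglyMeasurable[coordSigma W {e}] f)
    (hfi : Integrable f μ) {δ : ℝ} (hδ : 0 < δ) :
    ∃ g, IsRepresentable U μ e g ∧ ∫ w, |f w - g w| ∂μ ≤ δ := by
  have hle := coordSigma_le (W := W) {e}
  obtain ⟨g, hfg, hg⟩ := @MemLp.induction_dense _ ℝ (coordSigma W {e}) _ 1 (μ.trim hle)
    ENNReal.one_ne_top (IsRepresentable U μ e)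
    (fun c A hA _ ε hε => by
      obtain ⟨S, hS, hSA⟩ := exists_eLpNorm_indicator_sub_limitSet_le (μ := μ) c hA hε
      have hg := IsRepresentable.indicator_const hU hS c
      exact ⟨_, (eLpNorm_trim hle
        (hg.stronglyMeasurable.sub (stronglyMeasurable_const.indicator hA))).trans_le hSA, hg⟩)
    (fun _ _ => .add) (fun _ hg => hg.stronglyMeasurable.aestronglyMeasurable) f
    (memLp_one_iff_integrable.2 (hfi.trim hle hf)) (ENNReal.ofReal δ)
    (ENNReal.ofReal_pos.2 hδ).ne'
  rw [eLpNorm_trim _ (hf.sub hg.stronglyMeasurable), eLpNorm_one_eq_lintegral_enorm] at hfg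
  exact ⟨g, hg, (integral_norm_eq_lintegral_enorm (hfi.sub hg.integrable).1).trans_le
    (ENNReal.toReal_le_of_le_ofReal hδ.le hfg)⟩

/- An average over `S` is an average over the sections of `S`, so one of them retains at least its
absolute value. -/
lemma setIntegral_limitSet_eq_zero_of_slice [∀ i, Nonempty (W i)]
    (hU : IsLimitMeasure U density μ) {f : Ultrafilter (Sample V W) → ℝ}
    (hf : StronglyMeasurable[coordSigma W {e}] f) (hfi : Integrable f μ) {S : Set (Sample V W)}
    (h0 : ∀ y, ∫ w in limitSet (slice e y S), f w ∂μ = 0) : ∫ w in limitSet S, f w ∂μ = 0 := by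
  refine abs_nonpos_iff.1 (le_of_forall_pos_le_add fun δ hδ => ?_)
  obtain ⟨g, hg, hfg⟩ := IsRepresentable.exists_integral_abs_sub_le hU hf hfi (half_pos hδ)
  obtain ⟨h, hh, hlim⟩ := hg.exists_tendsto
  have hclose (T : Set (Sample V W)) :
      |∫ w in limitSet T, f w ∂μ - ∫ w in limitSet T, g w ∂μ| ≤ δ / 2 := by
    rw [← integral_sub hfi.integrableOn hg.integrable.integrableOn]
    exact abs_integral_le_integral_abs.trans <| (setIntegral_le_integral
      (hfi.sub hg.integrable).abs <| ae_of_all _ fun _ => abs_nonneg _).trans hfg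
  obtain ⟨y, hy⟩ := exists_abs_levelMean_indicator_le_slice hh S
  have hslice : |∫ w in limitSet S, g w ∂μ| ≤ |∫ w in limitSet (slice e y S), g w ∂μ| :=
    le_of_tendsto_of_tendsto' (hlim S).abs (hlim _).abs hy
  have hzero := hclose (slice e y S)
  rw [h0 y, zero_sub, abs_neg] at hzero
  linarith [abs_sub_abs_le_abs_sub (∫ w in limitSet S, f w ∂μ) (∫ w in limitSet S, g w ∂μ),
    hclose S]

end Representable

section Independence

variable {V I : Type*} {W : I → Type*}

/-- The intersection of the sets `D J` attached to the `j`-element faces `J` of `e`. -/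
def faceInter (D : Finset V → Set (Ultrafilter (Sample V W))) (j : ℕ) (e : Finset V) :
    Set (Ultrafilter (Sample V W)) :=
  ⋂ J ∈ e.powersetCard j, D J

lemma measurableSet_faceInter {D : Finset V → Set (Ultrafilter (Sample V W))}
    (hD : ∀ J, MeasurableSet[coordSigma W {J}] (D J)) (j : ℕ) (e : Finset V) :
    MeasurableSet[coordSigma W {e}] (faceInter D j e) :=
  Finset.measurableSet_biInter _ fun J hJ =>
    have hle : coordSigma W {J} ≤ coordSigma W {e} := coordSigma_mono fun _ hK =>
      ⟨e, rfl, (Set.mem_singleton_iff.1 hK).trans_subset (mem_powersetCard.1 hJ).1⟩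
    hle _ (hD J)

variable [Fintype V] [DecidableEq V] [∀ i, Fintype (W i)] [∀ i, Nonempty (W i)]
  {U : Ultrafilter I} {μ : Measure (Ultrafilter (Sample V W))} [IsFiniteMeasure μ]

lemma condProb_coordSigma_ae_eq (hU : IsLimitMeasure U density μ) {𝒦 : Set (Finset V)}
    (h𝒦 : IsLowerSet 𝒦) {e : Finset V} {A : Set (Ultrafilter (Sample V W))}
    (hA : MeasurableSet[coordSigma W {e}] A) :
    μ⟦A | coordSigma W 𝒦⟧ =ᵐ[μ] μ⟦A|coordSigma W {K ∈ 𝒦 | K ⊆ e}⟧ := by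
  set ℒ : Set (Finset V) := {K ∈ 𝒦 | K ⊆ e}
  set p := μ⟦A | coordSigma W ℒ⟧
  have hp : StronglyMeasurable[coordSigma W ℒ] p := stronglyMeasurable_condExp
  have hℒe : coordSigma W ℒ ≤ coordSigma W {e} := coordSigma_mono fun K hK => ⟨e, rfl, hK.2⟩
  have hA' := coordSigma_le {e} A hA
  have hAint : Integrable (A.indicator fun _ => (1 : ℝ)) μ := (integrable_const 1).indicator hA'
  have hint : Integrable (A.indicator (fun _ => (1 : ℝ)) - p) μ := hAint.sub integrable_condExp
  have hzero {E} (hE : MeasurableSet[coordSigma W ℒ] E) :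
      ∫ w in E, (A.indicator (fun _ => (1 : ℝ)) - p) w ∂μ = 0 := by
    rw [integral_sub' hAint.integrableOn integrable_condExp.integrableOn,
      setIntegral_condExp (coordSigma_le ℒ) hAint hE, sub_self]
  have hzero' {E} (hE : MeasurableSet[coordSigma W 𝒦] E) :
      ∫ w in E, (A.indicator (fun _ => (1 : ℝ)) - p) w ∂μ = 0 := by
    refine setIntegral_eq_zero_of_isSetAlgebra
      (isSetAlgebra_limitSet_image (isSetAlgebra_coordAlgebra 𝒦)) (coordSigma_le 𝒦) hint ?_ hE
    rintro _ ⟨S, hS, rfl⟩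
    have hslice (y : ∀ i, V → W i) : slice e y S ∈ coordAlgebra ℒ :=
      slice_mem_coordAlgebra
        (fun K hK => (⟨h𝒦 inter_subset_left hK, inter_subset_right⟩ : K ∩ e ∈ ℒ)) y hS
    exact setIntegral_limitSet_eq_zero_of_slice hU
      ((stronglyMeasurable_const.indicator hA).sub
        (hp.mono hℒe)) hint fun y => hzero (measurableSet_coordSigma_limitSet (hslice y))
  refine (ae_eq_condExp_of_forall_setIntegral_eq (coordSigma_le 𝒦) hAint
    (fun _ _ _ => integrable_condExp.integrableOn) (fun E hE _ => ?_)
    (hp.mono (coordSigma_mono fun K hK => ⟨K, hK.1, subset_rfl⟩)).aestronglyMeasurable).symm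
  have := hzero' hE
  rw [integral_sub' hAint.integrableOn integrable_condExp.integrableOn, sub_eq_zero] at this
  exact this.symm

lemma condProb_coordSigma_skeleton_ae_eq (hU : IsLimitMeasure U density μ) (j : ℕ) {e : Finset V}
    {A : Set (Ultrafilter (Sample V W))} (hA : MeasurableSet[coordSigma W {e}] A) :
    μ⟦A | coordSigma W (skeleton univ j)⟧ =ᵐ[μ] μ⟦A | coordSigma W (skeleton e j)⟧ := by
  have hfaces : {K ∈ skeleton univ j | K ⊆ e} = skeleton e j := by
    ext K; simp [skeleton, and_comm]
  exact hfaces ▸ condProb_coordSigma_ae_eq hU (isLowerSet_skeleton univ j) hA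

lemma condProb_coordSigma_not_superset_ae_eq (hU : IsLimitMeasure U density μ) {J : Finset V}
    {D : Set (Ultrafilter (Sample V W))} (hD : MeasurableSet[coordSigma W {J}] D) :
    μ⟦D|coordSigma W {K | ¬J ⊆ K}⟧ =ᵐ[μ] μ⟦D | coordSigma W (skeleton univ #J)⟧ := by
  have hlower : IsLowerSet {K : Finset V | ¬J ⊆ K} := fun _ _ hKL hK hJ => hK (hJ.trans hKL)
  have hfaces : {K ∈ {K : Finset V | ¬J ⊆ K} | K ⊆ J} = skeleton J #J := by
    ext K
    exact ⟨fun hK => ⟨hK.2, card_lt_card ⟨hK.2, hK.1⟩⟩,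
      fun hK => ⟨fun hJK => (card_le_card hJK).not_gt hK.2, hK.1⟩⟩
  exact (hfaces ▸ condProb_coordSigma_ae_eq hU hlower hD).trans
    (condProb_coordSigma_skeleton_ae_eq hU #J hD).symm

lemma condProb_inter_biInter (hU : IsLimitMeasure U density μ) {j : ℕ} {Js : Finset (Finset V)}
    (hJs : ∀ J ∈ Js, #J = j) {D : Finset V → Set (Ultrafilter (Sample V W))}
    (hD : ∀ J, MeasurableSet[coordSigma W {J}] (D J)) {X : Set (Ultrafilter (Sample V W))}
    (hX : MeasurableSet[coordSigma W {K | ∀ J ∈ Js, ¬J ⊆ K}] X) :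
    μ⟦X ∩ ⋂ J ∈ Js, D J | coordSigma W (skeleton univ j)⟧ =ᵐ[μ]
      μ⟦X | coordSigma W (skeleton univ j)⟧ *
        ∏ J ∈ Js, μ⟦D J | coordSigma W (skeleton univ j)⟧ := by
  induction Js using Finset.induction_on generalizing X with
  | empty => simp
  | insert J₀ Js hJ₀ ih =>
    obtain ⟨rfl, hJs⟩ := forall_mem_insert .. |>.1 hJs
    have hX_rest : coordSigma W {K | ∀ J ∈ insert J₀ Js, ¬J ⊆ K} ≤
        coordSigma W {K | ∀ J ∈ Js, ¬J ⊆ K} :=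
      coordSigma_mono fun K hK => ⟨K, fun J hJ => hK J (mem_insert_of_mem hJ), subset_rfl⟩
    have hD_rest : coordSigma W {J₀} ≤ coordSigma W {K | ∀ J ∈ Js, ¬J ⊆ K} :=
      coordSigma_mono fun K hK => ⟨K, fun J hJ hJK => hJ₀ <|
        eq_of_subset_of_card_le (hJK.trans_eq hK) (hJs J hJ).ge ▸ hJ, subset_rfl⟩
    have hX_J₀ : coordSigma W {K | ∀ J ∈ insert J₀ Js, ¬J ⊆ K} ≤ coordSigma W {K | ¬J₀ ⊆ K} :=
      coordSigma_mono fun K hK => ⟨K, hK J₀ (mem_insert_self _ _), subset_rfl⟩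
    have hsplit := condProb_inter_of_condProb_eq (m := coordSigma W (skeleton univ #J₀))
      (coordSigma_mono fun K hK => ⟨K, fun hJ₀K => (card_le_card hJ₀K).not_gt hK.2, subset_rfl⟩)
      (coordSigma_le _) (hX_J₀ X hX) (coordSigma_le _ _ (hD J₀))
      (condProb_coordSigma_not_superset_ae_eq hU (hD J₀))
    rw [set_biInter_insert, ← Set.inter_assoc, prod_insert hJ₀, ← mul_assoc]
    exact (ih hJs ((hX_rest X hX).inter (hD_rest _ (hD J₀)))).trans (hsplit.mul .rfl)

lemma condProb_biInter_sdiff_le (hU : IsLimitMeasure U density μ) {j : ℕ}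
    {Js : Finset (Finset V)} (hJs : ∀ J ∈ Js, #J = j)
    {D : Finset V → Set (Ultrafilter (Sample V W))}
    (hD : ∀ J, MeasurableSet[coordSigma W {J}] (D J)) {e : Finset V}
    (he : e.powersetCard j ⊆ Js) {A : Set (Ultrafilter (Sample V W))}
    (hA : MeasurableSet[coordSigma W {e}] A) (c : ℝ) :
    ∀ᵐ w ∂μ, w ∈ regularSet μ (coordSigma W (skeleton e j)) c (faceInter D j e) A →
      (μ⟦(⋂ J ∈ Js, D J) \ A | coordSigma W (skeleton univ j)⟧) w ≤
        c * (μ⟦⋂ J ∈ Js, D J | coordSigma W (skeleton univ j)⟧) w := by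
  set P := faceInter D j e
  have hP : MeasurableSet[coordSigma W {e}] P := measurableSet_faceInter hD j e
  have hJs' (J) (hJ : J ∈ Js \ e.powersetCard j) : #J = j := hJs J (mem_sdiff.1 hJ).1
  have hrest : coordSigma W {e} ≤ coordSigma W {K | ∀ J ∈ Js \ e.powersetCard j, ¬J ⊆ K} :=
    coordSigma_mono fun K hK => ⟨K, fun J hJ hJK => (mem_sdiff.1 hJ).2 <|
      mem_powersetCard.2 ⟨hJK.trans_eq hK, hJs' J hJ⟩, subset_rfl⟩
  have hinter : ⋂ J ∈ Js, D J = P ∩ ⋂ J ∈ Js \ e.powersetCard j, D J := by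
    change _ = (⋂ J ∈ e.powersetCard j, D J) ∩ _
    rw [← set_biInter_inter, union_sdiff_of_subset he]
  have hprod : ∀ᵐ w ∂μ,
      0 ≤ (∏ J ∈ Js \ e.powersetCard j, μ⟦D J | coordSigma W (skeleton univ j)⟧) w := by
    filter_upwards [(ae_ball_iff (Js \ e.powersetCard j).countable_toSet).2
      fun J _ => condProb_nonneg (m := coordSigma W (skeleton univ j)) (D J)] with w hw
    rw [prod_apply]
    exact prod_nonneg hw
  rw [hinter, Set.inter_sdiff_right_comm]
  filter_upwards [condProb_inter_biInter hU hJs' hD (hrest _ (hP.diff hA)),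
    condProb_inter_biInter hU hJs' hD (hrest _ hP),
    condProb_coordSigma_skeleton_ae_eq hU j (hP.diff hA),
    condProb_coordSigma_skeleton_ae_eq hU j hP, hprod] with w hPA hP' hlocPA hlocP hnonneg hreg
  rw [hPA, hP', Pi.mul_apply, Pi.mul_apply, ← mul_assoc, hlocPA, hlocP]
  exact mul_le_mul_of_nonneg_right hreg hnonneg

/- Over a point that is regular for every `A i`, the cell `⋂ J, D J` has positive conditional
probability `p`, while each `A i` misses at most `c * p` of it. -/
lemma measure_iInter_ne_zero_of_regularSet (hU : IsLimitMeasure U density μ) {ι : Type*}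
    [Fintype ι] {e : ι → Finset V} {A : ι → Set (Ultrafilter (Sample V W))}
    (hA : ∀ i, MeasurableSet[coordSigma W {e i}] (A i)) {j : ℕ}
    {D : Finset V → Set (Ultrafilter (Sample V W))}
    (hD : ∀ J, MeasurableSet[coordSigma W {J}] (D J)) {c : ℝ} (hc : Fintype.card ι * c < 1)
    (h : μ {w | ∀ i, w ∈ regularSet μ (coordSigma W (skeleton (e i) j)) c
        (faceInter D j (e i)) (A i) ∧
      ∀ J ∈ (e i).powersetCard j, 0 < (μ⟦D J | coordSigma W (skeleton J j)⟧) w} ≠ 0) :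
    μ (⋂ i, A i) ≠ 0 := by
  refine fun h0 => h (measure_eq_zero_iff_ae_notMem.2 ?_)
  set Js := univ.biUnion fun i => (e i).powersetCard j
  have hJs (J) (hJ : J ∈ Js) : #J = j := by
    obtain ⟨i, -, hi⟩ := mem_biUnion.1 hJ
    exact (mem_powersetCard.1 hi).2
  have hJsD := condProb_inter_biInter hU hJs hD (X := Set.univ) (@MeasurableSet.univ _ (_))
  simp only [Set.univ_inter] at hJsD
  have hone : μ⟦Set.univ | coordSigma W (skeleton univ j)⟧ = fun _ => 1 := by
    simpa only [Set.indicator_univ] using condExp_const (coordSigma_le _) (1 : ℝ)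
  have hmeas : MeasurableSet (⋂ J ∈ Js, D J) :=
    Finset.measurableSet_biInter _ fun J _ => coordSigma_le _ _ (hD J)
  filter_upwards [hJsD,
    condProb_le_sum_condProb_sdiff hmeas (fun i => coordSigma_le _ _ (hA i)) h0,
    (ae_ball_iff Js.countable_toSet).2 fun J _ => condProb_coordSigma_skeleton_ae_eq hU j (hD J),
    ae_all_iff.2 fun i => condProb_biInter_sdiff_le hU hJs hD
      (subset_biUnion_of_mem (fun i => (e i).powersetCard j) (mem_univ i)) (hA i) c]
    with w hprod hsum hlocal hreg hw
  set p := (μ⟦⋂ J ∈ Js, D J | coordSigma W (skeleton univ j)⟧) w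
  have hp : 0 < p := by
    rw [hprod, hone, Pi.mul_apply, one_mul, prod_apply]
    refine prod_pos fun J hJ => ?_
    obtain ⟨i, -, hi⟩ := mem_biUnion.1 hJ
    exact hlocal J hJ ▸ (hw i).2 J hi
  have hle : p ≤ Fintype.card ι * c * p := by
    refine hsum.trans ?_
    rw [Finset.sum_apply, mul_assoc, ← nsmul_eq_mul, ← card_univ]
    exact sum_le_card_nsmul _ _ _ fun i _ => hreg i (hw i).1
  exact hle.not_gt (mul_lt_of_lt_one_left hp hc)

end Independence

section Colourings

variable {V I κ : Type*} {W : I → Type*}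

lemma DependsOnCoords.mem_preimage {K : Finset V} {f : Sample V W → κ}
    (hf : DependsOnCoords K f) (T : Set κ) : DependsOnCoords K (· ∈ f ⁻¹' T) :=
  fun i _ _ h => congrArg (· ∈ T) (hf i h)

/-- The colours of the `j`-element faces of `e` at a sample, where the face `J` is coloured
by `col J`. -/
def profile (col : Finset V → Sample V W → κ) (j : ℕ) (e : Finset V) (z : Sample V W) :
    e.powersetCard j → κ :=
  fun J => col J z

lemma dependsOnCoords_profile {col : Finset V → Sample V W → κ}
    (hcol : ∀ J, DependsOnCoords J (col J)) (j : ℕ) (e : Finset V) :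
    DependsOnCoords e (profile col j e) :=
  fun i _ _ h => funext fun J => (hcol J).mono (mem_powersetCard.1 J.2).1 i h

lemma profile_preimage_singleton (col : Finset V → Sample V W → κ) (j : ℕ) (e : Finset V)
    (k : Finset V → κ) :
    profile col j e ⁻¹' {fun J => k J.1} = ⋂ J ∈ e.powersetCard j, col J ⁻¹' {k J} := by
  ext z
  simp only [profile, Set.mem_preimage, Set.mem_singleton_iff, Set.mem_iInter, funext_iff,
    Subtype.forall]

lemma limitSet_profile_preimage_singleton (col : Finset V → Sample V W → κ) (j : ℕ)
    (e : Finset V) (k : Finset V → κ) :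
    limitSet (profile col j e ⁻¹' {fun J => k J.1}) =
      faceInter (fun J => limitSet (col J ⁻¹' {k J})) j e := by
  rw [profile_preimage_singleton, limitSet_biInter, faceInter]

/-- Membership in a set of order `j + 1` is decided, once the colours of the `j`-element faces are
known, by a set of order `j`. -/
structure IsColouringOf (col : Finset V → Sample V W → κ) (j : ℕ) (e : Finset V)
    (R : (e.powersetCard j → κ) → Set (Sample V W)) (S : Set (Sample V W)) : Prop where
  dependsOnCoords : ∀ J, DependsOnCoords J (col J)
  mem_coordAlgebra : ∀ τ, R τ ∈ coordAlgebra (skeleton e j)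
  mem_iff : ∀ z, z ∈ S ↔ z ∈ R (profile col j e z)

lemma exists_isColouringOf_of_dependsOnCoords {e K : Finset V} {j : ℕ} {S : Set (Sample V W)}
    (hK : K ∈ skeleton e (j + 1)) (hS : DependsOnCoords K (· ∈ S)) :
    ∃ (κ : Type) (_ : Finite κ) (col : Finset V → Sample V W → κ) (R : _),
      IsColouringOf col j e R S := by
  rcases Nat.lt_succ_iff_lt_or_eq.1 hK.2 with hlt | heq
  · exact ⟨Unit, inferInstance, fun _ _ => (), fun _ => S,
      fun _ _ _ _ _ => rfl, fun _ => hS.mem_coordAlgebra ⟨hK.1, hlt⟩, fun _ => Iff.rfl⟩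
  · let K' : e.powersetCard j := ⟨K, mem_powersetCard.2 ⟨hK.1, heq⟩⟩
    refine ⟨Prop, inferInstance, fun J z => J = K ∧ z ∈ S, fun τ => {_z | τ K'},
      fun J i x y h => ?_, fun τ => ?_, fun z => (and_iff_right rfl).symm⟩
    · by_cases hJ : J = K
      · exact congrArg (J = K ∧ ·) (hS i (hJ ▸ h))
      · simp only [hJ, false_and]
    · by_cases hτ : τ K'
      · simpa only [hτ, Set.ofPred_true] using (isSetAlgebra_coordAlgebra _).univ_mem
      · simpa only [hτ, Set.ofPred_false] using (isSetAlgebra_coordAlgebra _).empty_mem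

lemma exists_isColouringOf {e : Finset V} {j : ℕ} {S : Set (Sample V W)}
    (hS : S ∈ coordAlgebra (skeleton e (j + 1))) :
    ∃ (κ : Type) (_ : Finite κ) (col : Finset V → Sample V W → κ) (R : _),
      IsColouringOf col j e R S := by
  induction hS with
  | base S hS =>
    obtain ⟨K, hK, hS⟩ := hS
    exact exists_isColouringOf_of_dependsOnCoords hK hS
  | empty =>
    exact ⟨Unit, inferInstance, fun _ _ => (), fun _ => ∅, fun _ _ _ _ _ => rfl, fun _ => .empty,
      fun _ => Iff.rfl⟩
  | compl S _ ih =>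
    obtain ⟨κ, hκ, col, R, h⟩ := ih
    exact ⟨κ, hκ, col, fun τ => (R τ)ᶜ, h.dependsOnCoords, fun τ => .compl _ (h.mem_coordAlgebra τ),
      fun z => not_congr (h.mem_iff z)⟩
  | union S T _ _ ihS ihT =>
    obtain ⟨κ, _, col, R, h⟩ := ihS
    obtain ⟨κ', _, col', R', h'⟩ := ihT
    exact ⟨κ × κ', inferInstance, fun J z => (col J z, col' J z),
      fun τ => R (fun J => (τ J).1) ∪ R' (fun J => (τ J).2),
      fun J i x y hxy => congrArg₂ Prod.mk (h.dependsOnCoords J i hxy) (h'.dependsOnCoords J i hxy),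
      fun τ => .union _ _ (h.mem_coordAlgebra _) (h'.mem_coordAlgebra _),
      fun z => or_congr (h.mem_iff z) (h'.mem_iff z)⟩

lemma exists_forall_isColouringOf {ι : Type u} [Finite ι] {e : ι → Finset V} {j : ℕ}
    {S : ι → Set (Sample V W)} (hS : ∀ i, S i ∈ coordAlgebra (skeleton (e i) (j + 1))) :
    ∃ (κ : Type u) (_ : Finite κ) (col : Finset V → Sample V W → κ)
      (R : ∀ i, ((e i).powersetCard j → κ) → Set (Sample V W)),
      (∀ J, DependsOnCoords J (col J)) ∧ ∀ i, IsColouringOf col j (e i) (R i) (S i) := by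
  choose κ hκ col R h using fun i => exists_isColouringOf (hS i)
  have hcol (J) : DependsOnCoords J fun z i => col i J z :=
    fun l x y hxy => funext fun i => (h i).dependsOnCoords J l hxy
  exact ⟨∀ i, κ i, inferInstance, fun J z i => col i J z, fun i τ => R i fun J => τ J i,
    hcol, fun i => ⟨hcol, fun τ => (h i).mem_coordAlgebra _, (h i).mem_iff⟩⟩

lemma IsColouringOf.limitSet_eq [Finite κ] {col : Finset V → Sample V W → κ} {j : ℕ}
    {e : Finset V} {R : (e.powersetCard j → κ) → Set (Sample V W)} {S : Set (Sample V W)}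
    (h : IsColouringOf col j e R S) :
    limitSet S = ⋃ τ, limitSet (profile col j e ⁻¹' {τ}) ∩ limitSet (R τ) := by
  have hS : S = ⋃ τ, profile col j e ⁻¹' {τ} ∩ R τ := by
    ext z
    simp only [h.mem_iff, Set.mem_iUnion, Set.mem_inter_iff, Set.mem_preimage,
      Set.mem_singleton_iff, exists_eq_left']
  rw [hS, limitSet_iUnion]
  simp only [limitSet_inter]

lemma pairwise_disjoint_limitSet_preimage_singleton (f : Sample V W → κ) :
    Pairwise (Function.onFun Disjoint fun k => limitSet (f ⁻¹' {k})) := by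
  intro k l hkl
  rw [Function.onFun, Set.disjoint_iff_inter_eq_empty, ← limitSet_inter, ← Set.preimage_inter,
    (Set.singleton_inter_eq_empty (s := {l})).2 hkl, Set.preimage_empty, limitSet_empty]

lemma exists_mem_limitSet_preimage_singleton [Finite κ] (f : Sample V W → κ)
    (w : Ultrafilter (Sample V W)) : ∃ k, w ∈ limitSet (f ⁻¹' {k}) := by
  rw [← Set.mem_iUnion, ← limitSet_iUnion, ← Set.preimage_iUnion, Set.iUnion_of_singleton,
    Set.preimage_univ, limitSet_univ]
  trivial

end Colourings

section Induction

variable {V : Type u} {I : Type*} {W : I → Type*} {μ : Measure (Ultrafilter (Sample V W))}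

/-- The infinitary removal lemma for measurable sets of order `j`: the sets `A i` can be replaced
by internal sets which nearly contain them, and which have a common point only where the
corresponding `A i` meet in positive measure. -/
def RemovalAtOrder (μ : Measure (Ultrafilter (Sample V W))) (j : ℕ) : Prop :=
  ∀ (ι : Type u) [Finite ι] (e : ι → Finset V) (A : ι → Set (Ultrafilter (Sample V W))),
    (∀ i, MeasurableSet[coordSigma W (skeleton (e i) j)] (A i)) → ∀ ε : ℝ, 0 < ε →
    ∃ A' : ι → Set (Sample V W), (∀ i, DependsOnCoords (e i) (· ∈ A' i)) ∧
      (∀ i, μ.real (A i \ limitSet (A' i)) ≤ ε) ∧ ∀ z, μ {w | ∀ i, z ∈ A' i → w ∈ A i} ≠ 0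

lemma eq_empty_or_univ_of_measurableSet_coordSigma_empty {A : Set (Ultrafilter (Sample V W))}
    (hA : MeasurableSet[coordSigma W ∅] A) : A = ∅ ∨ A = Set.univ := by
  have hle : coordSigma (V := V) W ∅ ≤ ⊥ := by
    refine MeasurableSpace.generateFrom_le ?_
    rintro _ ⟨S, hS, rfl⟩
    induction hS with
    | base S hS => exact hS.elim fun _ h => h.1.elim
    | empty => exact limitSet_empty ▸ @MeasurableSet.empty _ ⊥
    | compl S _ ih => exact limitSet_compl S ▸ ih.compl
    | union S T _ _ ihS ihT => exact limitSet_union S T ▸ ihS.union ihT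
  exact MeasurableSpace.measurableSet_bot_iff.1 (hle A hA)

lemma removalAtOrder_zero [NeZero μ] : RemovalAtOrder μ 0 := by
  intro ι _ e A hA ε hε
  have hskel (i : ι) : skeleton (e i) 0 = ∅ :=
    Set.eq_empty_of_forall_notMem fun _ hK => Nat.not_lt_zero _ hK.2
  refine ⟨fun i => {_z | A i = Set.univ}, fun _ _ _ _ _ => rfl, fun i => ?_, fun z => ?_⟩
  · rcases eq_empty_or_univ_of_measurableSet_coordSigma_empty (hskel i ▸ hA i) with h | h
    · simpa only [h, Set.empty_sdiff, measureReal_empty] using hε.le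
    · simpa only [h, Set.ofPred_true, limitSet_univ, sdiff_self, Set.bot_eq_empty,
        measureReal_empty] using hε.le
  · have huniv : {w | ∀ i, A i = Set.univ → w ∈ A i} = Set.univ :=
      Set.eq_univ_of_forall fun w i hi => hi ▸ Set.mem_univ w
    exact ne_of_eq_of_ne (congrArg μ huniv) (Measure.measure_univ_ne_zero.2 (NeZero.ne μ))

end Induction

section Assembly

variable {V I ι κ : Type*} {W : I → Type*} {e : ι → Finset V} {j : ℕ}

/-- Indices for the auxiliary sets of order `j` arising from sets of order `j + 1`: a face with a
colour, or an index `i` with a colouring of the `j`-element faces of `e i`. -/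
abbrev AuxIndex (e : ι → Finset V) (j : ℕ) (κ : Type*) :=
  (Finset V × κ) ⊕ Σ i, ((e i).powersetCard j → κ)

/-- The face whose coordinates the auxiliary set depends on. -/
def auxFace (e : ι → Finset V) (j : ℕ) (κ : Type*) : AuxIndex e j κ → Finset V :=
  Sum.elim Prod.fst fun p => e p.1

/-- The auxiliary sets: the points where a face has a given colour with positive conditional
probability, and those where `A i` fills a cell of given profile up to a proportion `c`. -/
def auxSet (μ : Measure (Ultrafilter (Sample V W))) (c : ℝ) (col : Finset V → Sample V W → κ)
    (A : ι → Set (Ultrafilter (Sample V W))) : AuxIndex e j κ → Set (Ultrafilter (Sample V W)) :=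
  Sum.elim
    (fun p => {w | 0 < (μ⟦limitSet (col p.1 ⁻¹' {p.2}) | coordSigma W (skeleton p.1 j)⟧) w})
    (fun p => regularSet μ (coordSigma W (skeleton (e p.1) j)) c
      (limitSet (profile col j (e p.1) ⁻¹' {p.2})) (A p.1))

/-- The samples which, for every auxiliary set relevant to `A i` in view of their own colours,
belong to the internal set `Y q` approximating it. -/
def assembled (col : Finset V → Sample V W → κ) (Y : AuxIndex e j κ → Set (Sample V W)) (i : ι) :
    Set (Sample V W) :=
  {z | z ∈ Y (.inr ⟨i, profile col j (e i) z⟩) ∧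
    ∀ J ∈ (e i).powersetCard j, z ∈ Y (.inl (J, col J z))}

lemma measurableSet_auxSet {μ : Measure (Ultrafilter (Sample V W))} {c : ℝ}
    {col : Finset V → Sample V W → κ} {A : ι → Set (Ultrafilter (Sample V W))} :
    ∀ q : AuxIndex e j κ,
      MeasurableSet[coordSigma W (skeleton (auxFace e j κ q) j)] (auxSet μ c col A q)
  | .inl _ => measurableSet_lt measurable_const stronglyMeasurable_condExp.measurable
  | .inr _ => measurableSet_regularSet c _ _

lemma dependsOnCoords_assembled {col : Finset V → Sample V W → κ}
    (hcol : ∀ J, DependsOnCoords J (col J)) {Y : AuxIndex e j κ → Set (Sample V W)}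
    (hY : ∀ q, DependsOnCoords (auxFace e j κ q) (· ∈ Y q)) (i : ι) :
    DependsOnCoords (e i) (· ∈ assembled col Y i) := by
  intro l x y hxy
  have hprofile : profile col j (e i) ⟨l, x⟩ = profile col j (e i) ⟨l, y⟩ :=
    dependsOnCoords_profile hcol j (e i) l hxy
  refine congrArg₂ And ?_ (propext (forall₂_congr fun J hJ => ?_))
  · rw [hprofile]
    exact hY (.inr ⟨i, _⟩) l hxy
  · have hJxy : ∀ v ∈ (J : Set V), x v = y v :=
      fun v hv => hxy v ((mem_powersetCard.1 hJ).1 hv)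
    have hcolJ : col J ⟨l, x⟩ = col J ⟨l, y⟩ := hcol J l hJxy
    rw [hcolJ]
    exact iff_of_eq (hY (.inl (J, _)) l hJxy)

lemma mem_limitSet_assembled {col : Finset V → Sample V W → κ}
    {Y : AuxIndex e j κ → Set (Sample V W)} {i : ι} {w : Ultrafilter (Sample V W)}
    {k : Finset V → κ} (hk : w ∈ limitSet (profile col j (e i) ⁻¹' {fun J => k J.1}))
    (hY : w ∈ limitSet (Y (.inr ⟨i, fun J => k J.1⟩)))
    (hYface : ∀ J ∈ (e i).powersetCard j, w ∈ limitSet (Y (.inl (J, k J)))) :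
    w ∈ limitSet (assembled col Y i) := by
  have hsub : profile col j (e i) ⁻¹' {fun J => k J.1} ∩ Y (.inr ⟨i, fun J => k J.1⟩) ∩
      ⋂ J ∈ (e i).powersetCard j, Y (.inl (J, k J)) ⊆ assembled col Y i := by
    rintro z ⟨⟨hz, hzY⟩, hzface⟩
    have hz : profile col j (e i) z = fun J => k J.1 := hz
    refine ⟨hz ▸ hzY, fun J hJ => ?_⟩
    have hcolJ : col J z = k J := congrFun hz ⟨J, hJ⟩
    exact hcolJ ▸ Set.mem_iInter₂.1 hzface J hJ
  refine limitSet_mono hsub ?_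
  rw [limitSet_inter, limitSet_inter, limitSet_biInter]
  exact ⟨⟨hk, hY⟩, Set.mem_iInter₂.2 hYface⟩

variable {μ : Measure (Ultrafilter (Sample V W))} {c : ℝ} {col : Finset V → Sample V W → κ}
  {A : ι → Set (Ultrafilter (Sample V W))} {Y : AuxIndex e j κ → Set (Sample V W)}

lemma sdiff_limitSet_assembled_subset [Finite κ] {i : ι}
    {R : ((e i).powersetCard j → κ) → Set (Sample V W)} {S : Set (Sample V W)}
    (hS : IsColouringOf col j (e i) R S) :
    A i \ limitSet (assembled col Y i) ⊆ A i \ limitSet S ∪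
      (⋃ τ, (limitSet (profile col j (e i) ⁻¹' {τ}) ∩ limitSet (R τ)) \
        auxSet μ c col A (.inr ⟨i, τ⟩ : AuxIndex e j κ)) ∪
      (⋃ q, auxSet μ c col A q \ limitSet (Y q)) ∪
      ⋃ p : Finset V × κ, limitSet (col p.1 ⁻¹' {p.2}) \
        auxSet μ c col A (.inl p : AuxIndex e j κ) := by
  rintro w ⟨hwA, hw⟩
  by_contra hcon
  simp only [Set.mem_union, Set.mem_iUnion, Set.mem_sdiff, not_or, not_exists, not_and,
    not_not] at hcon
  obtain ⟨⟨⟨hwS, hregular⟩, happrox⟩, hpos⟩ := hcon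
  choose k hk using fun J => exists_mem_limitSet_preimage_singleton (col J) w
  have hprofile : w ∈ limitSet (profile col j (e i) ⁻¹' {fun J => k J.1}) := by
    rw [limitSet_profile_preimage_singleton]
    exact Set.mem_iInter₂.2 fun J _ => hk J
  have hR : w ∈ limitSet (R fun J => k J.1) := by
    have hsub : profile col j (e i) ⁻¹' {fun J => k J.1} ∩ S ⊆ R fun J => k J.1 := by
      rintro z ⟨hz, hzS⟩
      exact (Set.mem_singleton_iff.1 hz) ▸ (hS.mem_iff z).1 hzS
    refine limitSet_mono hsub ?_
    rw [limitSet_inter]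
    exact ⟨hprofile, hwS hwA⟩
  exact hw (mem_limitSet_assembled hprofile (happrox _ (hregular _ ⟨hprofile, hR⟩))
    fun J _ => happrox _ (hpos (J, k J) (hk J)))

variable [IsFiniteMeasure μ]

lemma measureReal_sdiff_limitSet_assembled_le [Finite V] [Finite κ] [Fintype (AuxIndex e j κ)]
    (hc : 0 < c) {i : ι} (hA : MeasurableSet (A i))
    {R : ((e i).powersetCard j → κ) → Set (Sample V W)} {S : Set (Sample V W)}
    (hS : IsColouringOf col j (e i) R S) {δ δ' : ℝ} (hSA : μ.real (limitSet S ∆ A i) ≤ δ)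
    (hY : ∀ q, μ.real (auxSet μ c col A q \ limitSet (Y q)) ≤ δ') :
    μ.real (A i \ limitSet (assembled col Y i)) ≤
      δ + δ / c + Fintype.card (AuxIndex e j κ) * δ' := by
  have := Fintype.ofFinite V
  have := Fintype.ofFinite κ
  have hSsdiff : μ.real (A i \ limitSet S) ≤ δ :=
    (measureReal_mono Set.subset_union_right).trans hSA
  have hirregular : μ.real (⋃ τ, (limitSet (profile col j (e i) ⁻¹' {τ}) ∩ limitSet (R τ)) \
      auxSet μ c col A (.inr ⟨i, τ⟩ : AuxIndex e j κ)) ≤ δ / c := by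
    rw [le_div_iff₀' hc]
    refine (mul_measureReal_iUnion_sdiff_regularSet_le (coordSigma_le _) hc.le
      (fun τ => measurableSet_limitSet _) (pairwise_disjoint_limitSet_preimage_singleton _) hA
      fun τ => measurableSet_coordSigma_limitSet (hS.mem_coordAlgebra τ)).trans ?_
    rw [← hS.limitSet_eq]
    exact (measureReal_mono Set.subset_union_left).trans hSA
  have happrox : μ.real (⋃ q, auxSet μ c col A q \ limitSet (Y q)) ≤
      Fintype.card (AuxIndex e j κ) * δ' := by
    refine (measureReal_iUnion_fintype_le _).trans ((sum_le_card_nsmul _ _ _ fun q _ =>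
      hY q).trans_eq ?_)
    rw [card_univ, nsmul_eq_mul]
  have hnull : μ.real (⋃ p : Finset V × κ, limitSet (col p.1 ⁻¹' {p.2}) \
      auxSet μ c col A (.inl p : AuxIndex e j κ)) ≤ 0 :=
    (measureReal_iUnion_fintype_le _).trans <| sum_nonpos fun p _ =>
      (measureReal_sdiff_condProb_pos (coordSigma_le _) (measurableSet_limitSet _)).le
  refine (measureReal_mono (sdiff_limitSet_assembled_subset (c := c) hS)).trans ?_
  grw [measureReal_union_le, measureReal_union_le, measureReal_union_le, hSsdiff, hirregular,
    happrox, hnull, add_zero]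

variable [Fintype V] [DecidableEq V] [∀ i, Fintype (W i)] [∀ i, Nonempty (W i)] {U : Ultrafilter I}

lemma measure_forall_mem_assembled_ne_zero (hU : IsLimitMeasure U density μ) [Fintype ι]
    (hA : ∀ i, MeasurableSet[coordSigma W {e i}] (A i))
    (hcol : ∀ J, DependsOnCoords J (col J)) (hc : 0 ≤ c) (hcard : Fintype.card ι * c < 1)
    {z : Sample V W} (h : μ {w | ∀ q, z ∈ Y q → w ∈ auxSet μ c col A q} ≠ 0) :
    μ {w | ∀ i, z ∈ assembled col Y i → w ∈ A i} ≠ 0 := by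
  classical
  have hcard' : Fintype.card {i // z ∈ assembled col Y i} * c < 1 := by
    grw [Fintype.card_subtype_le]
    exact hcard
  have hmem : {w | ∀ i, z ∈ assembled col Y i → w ∈ A i} =
      ⋂ i : {i // z ∈ assembled col Y i}, A i := by
    ext w
    simp only [Set.mem_ofPred_eq, Set.mem_iInter, Subtype.forall]
  rw [hmem]
  refine measure_iInter_ne_zero_of_regularSet hU (j := j) (fun i => hA i)
    (fun J => ((hcol J).mem_preimage {col J z}).measurableSet_limitSet) hcard'
    (mt (measure_mono_null ?_) h)
  refine fun w hw i => ⟨?_, fun J hJ => ?_⟩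
  · rw [← limitSet_profile_preimage_singleton col j (e i) fun J => col J z]
    exact hw (.inr ⟨i, _⟩) i.2.1
  · exact hw (.inl (J, col J z)) (i.2.2 J hJ)

end Assembly

section InductionStep

variable {V : Type u} [Fintype V] [DecidableEq V] {I : Type*} {W : I → Type*}
  [∀ i, Fintype (W i)] [∀ i, Nonempty (W i)] {U : Ultrafilter I}
  {μ : Measure (Ultrafilter (Sample V W))} [IsFiniteMeasure μ]

lemma RemovalAtOrder.succ (hU : IsLimitMeasure U density μ) {j : ℕ} (h : RemovalAtOrder μ j) :
    RemovalAtOrder μ (j + 1) := by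
  intro ι _ e A hA ε hε
  have := Fintype.ofFinite ι
  obtain ⟨c, hc, hcard⟩ := exists_pos_mul_lt one_pos (Fintype.card ι : ℝ)
  obtain ⟨δ, hδ, hδε⟩ : ∃ δ : ℝ, 0 < δ ∧ δ + δ / c ≤ ε / 2 :=
    ⟨c * (ε / 2) / (c + 1), by positivity, le_of_eq (by field_simp)⟩
  choose S hS hSA using fun i => exists_limitSet_measure_symmDiff_lt
    (isSetAlgebra_coordAlgebra _) μ (hA i) (ENNReal.ofReal_pos.2 hδ)
  obtain ⟨κ, _, col, R, hcol, hcolour⟩ := exists_forall_isColouringOf hS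
  have := Fintype.ofFinite (AuxIndex e j κ)
  obtain ⟨δ', hδ', hδ'ε⟩ :=
    exists_pos_mul_lt (half_pos hε) (Fintype.card (AuxIndex e j κ) : ℝ)
  obtain ⟨Y, hYdep, hYclose, hYmeet⟩ :=
    h (AuxIndex e j κ) (auxFace e j κ) (auxSet μ c col A) measurableSet_auxSet δ' hδ'
  refine ⟨assembled col Y, dependsOnCoords_assembled hcol hYdep, fun i => ?_, fun z => ?_⟩
  · have hclose := measureReal_sdiff_limitSet_assembled_le hc (coordSigma_le _ _ (hA i))
      (hcolour i) (ENNReal.toReal_le_of_le_ofReal hδ.le (hSA i).le) hYclose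
    linarith
  · exact measure_forall_mem_assembled_ne_zero hU (fun i => coordSigma_skeleton_le W _ _ _ (hA i))
      hcol hc.le hcard (hYmeet z)

theorem removalAtOrder [NeZero μ] (hU : IsLimitMeasure U density μ) (j : ℕ) :
    RemovalAtOrder μ j := by
  induction j with
  | zero => exact removalAtOrder_zero
  | succ j ih => exact ih.succ hU

end InductionStep

section Transfer

variable {V : Type u} [Fintype V] {I : Type*} {W : I → Type*} [∀ i, Fintype (W i)]

open scoped Classical in
lemma density_eq_card_div (i : I) (S : Set (Sample V W)) :
    density i S = #{x : V → W i | (⟨i, x⟩ : Sample V W) ∈ S} /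
      (Fintype.card (W i) : ℝ) ^ Fintype.card V := by
  rw [density, levelMean, Fintype.expect_eq_sum_div_card, Fintype.card_fun]
  simp only [Set.indicator_apply, sum_boole, Nat.cast_pow]

lemma exists_dependsOnCoords_of_tendsto_density [DecidableEq V] [∀ i, Nonempty (W i)]
    {U : Ultrafilter I} {ι : Type u} [Finite ι] {e : ι → Finset V} {A : ι → Set (Sample V W)}
    (hA : ∀ i, DependsOnCoords (e i) (· ∈ A i))
    (hlim : Tendsto (fun k => density k (⋂ i, A i)) U (𝓝 0)) {ε : ℝ} (hε : 0 < ε) :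
    ∃ A' : ι → Set (Sample V W), (∀ i, DependsOnCoords (e i) (· ∈ A' i)) ∧ ⋂ i, A' i = ∅ ∧
      ∀ᶠ k in U, ∀ i, density k (A i \ A' i) ≤ ε := by
  obtain ⟨μ, _, hU⟩ := exists_isLimitMeasure U (isFinitelyAdditiveProb_density (V := V) (W := W))
  have hnull : μ (⋂ i, limitSet (A i)) = 0 := by
    rw [← limitSet_iInter, ← measureReal_eq_zero_iff]
    exact tendsto_nhds_unique (hU _) hlim
  have hskeleton (i : ι) : e i ∈ skeleton (e i) (Fintype.card V + 1) :=
    ⟨Subset.rfl, Nat.lt_succ_of_le (card_le_univ _)⟩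
  obtain ⟨A', hA', hclose, hmeet⟩ := removalAtOrder hU (Fintype.card V + 1) ι e
    (fun i => limitSet (A i))
    (fun i => measurableSet_coordSigma_limitSet ((hA i).mem_coordAlgebra (hskeleton i)))
    (ε / 2) (half_pos hε)
  refine ⟨A', hA', Set.eq_empty_of_forall_notMem fun z hz => hmeet z ?_, ?_⟩
  · exact measure_mono_null (fun w hw => Set.mem_iInter.2 fun i => hw i (Set.mem_iInter.1 hz i))
      hnull
  · refine eventually_all.2 fun i => ?_
    have hlt : μ.real (limitSet (A i \ A' i)) < ε := by
      rw [Set.sdiff_eq, limitSet_inter, limitSet_compl, ← Set.sdiff_eq]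
      exact (hclose i).trans_lt (half_lt_self hε)
    exact ((hU _).eventually_lt_const hlt).mono fun _ => le_of_lt

end Transfer

section Removal

variable {V β : Type*} [Fintype V] [Fintype β] [DecidableEq β]

lemma card_image_image_mul_le {e : Finset V} {T : Finset (V → β)}
    (hT : DependsOn (· ∈ T) (e : Set V)) :
    #(T.image fun x => e.image x) * Fintype.card β ^ Fintype.card V ≤
      #T * Fintype.card β ^ #e := by
  classical
  have hsurj : Set.SurjOn
      (fun p : (V → β) × (e → β) =>
        (e.image p.1, fun v => if hv : v ∈ e then p.2 ⟨v, hv⟩ else p.1 v))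
      (T ×ˢ univ : Finset ((V → β) × (e → β)))
      ((T.image fun x => e.image x) ×ˢ univ : Finset (Finset β × (V → β))) := by
    rintro ⟨g, y⟩ hgy
    obtain ⟨x, hx, rfl⟩ := mem_image.1 (mem_product.1 hgy).1
    have hagree : ∀ v ∈ (e : Set V), e.piecewise x y v = x v :=
      fun v hv => e.piecewise_eq_of_mem _ _ hv
    refine ⟨(e.piecewise x y, fun v => y v), mem_product.2 ⟨?_, mem_univ _⟩, Prod.ext ?_ ?_⟩
    · exact (hT hagree).mpr hx
    · exact image_congr hagree
    · ext v
      by_cases hv : v ∈ e <;> simp [hv]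
  simpa only [card_product, card_univ, Fintype.card_fun, Fintype.card_coe] using
    card_le_card_of_surjOn _ hsurj

open scoped Classical in
lemma exists_subset_not_containsHom [Nonempty β] {F : Finset (Finset V)} {r : ℕ}
    (hF : ∀ e ∈ F, #e ≤ r) {G : Finset (Finset β)} {B : F → Set (V → β)}
    (hB : ∀ e, DependsOn (· ∈ B e) (e : Finset V)) (hBF : ∀ x, ∃ e, x ∉ B e) {η : ℝ}
    (hη : ∀ e : F, #{x : V → β | e.1.image x ∈ G ∧ x ∉ B e} ≤
      η * (Fintype.card β : ℝ) ^ Fintype.card V) :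
    ∃ G' ⊆ G, (#(G \ G') : ℝ) ≤ #F * (η * (Fintype.card β : ℝ) ^ r) ∧ ¬ ContainsHom F G' := by
  set T : F → Finset (V → β) := fun e => {x | e.1.image x ∈ G ∧ x ∉ B e} with hTdef
  have hTdep (e : F) : DependsOn (· ∈ T e) (e.1 : Set V) := fun x y hxy => by
    have himage : e.1.image x = e.1.image y := image_congr hxy
    simp only [hTdef, mem_filter_univ, himage, hB e hxy]
  set D : Finset (Finset β) := univ.biUnion fun e : F => (T e).image fun x => e.1.image x
  have hD (e : F) : (#((T e).image fun x => e.1.image x) : ℝ) ≤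
      η * (Fintype.card β : ℝ) ^ r := by
    have hpos : 0 < (Fintype.card β : ℝ) ^ Fintype.card V := by positivity
    refine le_of_mul_le_mul_right ?_ hpos
    calc (#((T e).image fun x => e.1.image x) : ℝ) * (Fintype.card β : ℝ) ^ Fintype.card V
        ≤ #(T e) * (Fintype.card β : ℝ) ^ #e.1 := mod_cast card_image_image_mul_le (hTdep e)
      _ ≤ #(T e) * (Fintype.card β : ℝ) ^ r := by
        gcongr
        exacts [mod_cast Fintype.card_pos, hF e e.2]
      _ ≤ η * (Fintype.card β : ℝ) ^ Fintype.card V * (Fintype.card β : ℝ) ^ r := by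
        gcongr
        exact hη e
      _ = _ := mul_right_comm _ _ _
  refine ⟨G \ D, sdiff_subset, ?_, ?_⟩
  · calc (#(G \ (G \ D)) : ℝ) ≤ #D := mod_cast card_le_card (sdiff_sdiff_le)
      _ ≤ ∑ e : F, (#((T e).image fun x => e.1.image x) : ℝ) := mod_cast card_biUnion_le
      _ ≤ ∑ _e : F, η * (Fintype.card β : ℝ) ^ r := sum_le_sum fun e _ => hD e
      _ = #F * (η * (Fintype.card β : ℝ) ^ r) := by
        rw [sum_const, card_univ, Fintype.card_coe, nsmul_eq_mul]
  · rintro ⟨f, hf⟩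
    obtain ⟨e, he⟩ := hBF f
    obtain ⟨hfG, hfD⟩ := mem_sdiff.1 (hf e e.2)
    exact hfD (mem_biUnion.2 ⟨e, mem_univ _, mem_image_of_mem _ (mem_filter_univ _ |>.2 ⟨hfG, he⟩)⟩)

end Removal

open scoped Classical in
theorem hypergraph_removal {V : Type u} [Fintype V] {F : Finset (Finset V)} {r : ℕ}
    (hF : ∀ e ∈ F, #e ≤ r) {ε : ℝ} (hε : 0 < ε) :
    ∃ δ : ℝ, 0 < δ ∧ ∀ (β : Type v) [Fintype β] [DecidableEq β] [Nonempty β]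
      (G : Finset (Finset β)),
      #{x : V → β | ∀ e ∈ F, e.image x ∈ G} ≤ δ * (Fintype.card β : ℝ) ^ Fintype.card V →
        ∃ G' ⊆ G, (#(G \ G') : ℝ) ≤ ε * (Fintype.card β : ℝ) ^ r ∧ ¬ ContainsHom F G' := by
  by_contra! hcon
  choose W _ _ _ G hcount hG using fun k : ℕ => hcon (1 / (k + 1)) Nat.one_div_pos_of_nat
  set A : F → Set (Sample V W) := fun e => {z | e.1.image z.2 ∈ G z.1} with hAdef
  have hA (e : F) : DependsOnCoords e.1 (· ∈ A e) := fun k x y hxy =>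
    congrArg (· ∈ G k) (image_congr hxy)
  have hlim : Tendsto (fun k => density k (⋂ e, A e)) (hyperfilter ℕ) (𝓝 0) := by
    refine tendsto_of_tendsto_of_tendsto_of_le_of_le tendsto_const_nhds
      (tendsto_one_div_add_atTop_nhds_zero_nat.mono_left Nat.hyperfilter_le_atTop)
      (fun k => (isFinitelyAdditiveProb_density k).nonneg _) fun k => ?_
    rw [density_eq_card_div]
    refine div_le_of_le_mul₀ (by positivity) Nat.one_div_pos_of_nat.le ?_
    simpa only [hAdef, Set.mem_iInter, Set.mem_ofPred_eq, Subtype.forall] using hcount k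
  obtain ⟨η, hη, hηε⟩ := exists_pos_mul_lt hε (#F : ℝ)
  obtain ⟨A', hA', hempty, hdensity⟩ := exists_dependsOnCoords_of_tendsto_density hA hlim hη
  obtain ⟨k, hk⟩ := hdensity.exists
  have hfew (e : F) : #{x : V → W k | e.1.image x ∈ G k ∧ (⟨k, x⟩ : Sample V W) ∉ A' e} ≤
      η * (Fintype.card (W k) : ℝ) ^ Fintype.card V := by
    have hke := hk e
    rw [density_eq_card_div, div_le_iff₀ (by positivity)] at hke
    simpa only [hAdef, Set.mem_sdiff, Set.mem_ofPred_eq] using hke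
  obtain ⟨G', hG', hcard, hhom⟩ := exists_subset_not_containsHom hF (fun e => hA' e k)
    (fun x => not_forall.1 fun h => hempty.subset (Set.mem_iInter.2 h)) hfew
  refine hhom (hG k G' hG' (hcard.trans ?_))
  rw [← mul_assoc]
  gcongr

open scoped Classical in
lemma eventually_card_not_injective_le (V : Type*) [Fintype V] {δ : ℝ} (hδ : 0 < δ) :
    ∀ᶠ n : ℕ in atTop, #{x : V → Fin n | ¬ Function.Injective x} ≤
      δ * (n : ℝ) ^ Fintype.card V := by
  filter_upwards [(isEquivalent_descFactorial (Fintype.card V)).isLittleO.bound hδ] with n hn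
  have hinj : #{x : V → Fin n | Function.Injective x} = n.descFactorial (Fintype.card V) := by
    rw [← Fintype.card_subtype, Fintype.card_congr (Equiv.subtypeInjectiveEquivEmbedding V (Fin n)),
      Fintype.card_embedding_eq, Fintype.card_fin]
  have hsum := card_filter_add_card_filter_not (s := univ)
    (Function.Injective (α := V) (β := Fin n))
  rw [hinj, card_univ, Fintype.card_fun, Fintype.card_fin] at hsum
  have hsum' : (n.descFactorial (Fintype.card V) : ℝ) +
      #{x : V → Fin n | ¬ Function.Injective x} = (n : ℝ) ^ Fintype.card V := mod_cast hsum
  rw [Pi.sub_apply, Real.norm_eq_abs, Real.norm_of_nonneg (by positivity), abs_le] at hn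
  linarith [hn.1]

lemma eventually_pow_le_mul_choose (r : ℕ) :
    ∃ C > 0, ∀ᶠ n : ℕ in atTop, (n : ℝ) ^ r ≤ C * n.choose r := by
  obtain ⟨C, hC, h⟩ := (isTheta_choose r).2.exists_pos
  refine ⟨C, hC, h.bound.mono fun n hn => ?_⟩
  simpa using hn

end HypergraphRemoval

theorem removal_to_hom_free_general {α : Type*} [Finite α] {r : ℕ} {F : Finset (Finset α)}
    (hF : ∀ e ∈ F, #e ≤ r) {η : ℝ} (hη : 0 < η) :
    ∃ n₀ : ℕ, 0 < n₀ ∧ ∀ n : ℕ, n₀ < n → ∀ G : Finset (Finset (Fin n)), ¬ ContainsCopy F G →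
      ∃ G' ⊆ G, (#(G \ G') : ℝ) ≤ η * n.choose r ∧ ¬ ContainsHom F G' := by
  classical
  have := Fintype.ofFinite α
  obtain ⟨C, hC, hchoose⟩ := HypergraphRemoval.eventually_pow_le_mul_choose r
  obtain ⟨δ, hδ, hremoval⟩ := HypergraphRemoval.hypergraph_removal hF (div_pos hη hC)
  obtain ⟨N, hN⟩ := Filter.eventually_atTop.1
    (hchoose.and (HypergraphRemoval.eventually_card_not_injective_le α hδ))
  refine ⟨N + 1, N.succ_pos, fun n hn G hG => ?_⟩
  obtain ⟨hpow, hnoninj⟩ := hN n (N.lt_succ_self.trans hn).le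
  have : NeZero n := ⟨(Nat.zero_lt_of_lt hn).ne'⟩
  have hhom : #{x : α → Fin n | ∀ e ∈ F, e.image x ∈ G} ≤
      #{x : α → Fin n | ¬ Function.Injective x} :=
    card_le_card (monotone_filter_right _ fun x _ hx hinj => hG ⟨x, hinj, hx⟩)
  obtain ⟨G', hG', hcard, hfree⟩ := hremoval (Fin n) G (by
    rw [Fintype.card_fin]
    exact (Nat.cast_le.2 hhom).trans hnoninj)
  refine ⟨G', hG', hcard.trans ?_, hfree⟩
  calc η / C * (Fintype.card (Fin n) : ℝ) ^ r ≤ η / C * (C * n.choose r) := by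
        rw [Fintype.card_fin]
        gcongr
    _ = η * n.choose r := by rw [← mul_assoc, div_mul_cancel₀ _ hC.ne']

/-- **Lemma (removal to hom-freeness).**  Fix an `r`-graph `F` and `η₂ > 0`.  There exists
`n₀ > 0` such that every `F`-free `n`-vertex `r`-graph `G` with `n > n₀` can be made
`F`-hom-free by deleting at most `η₂·C(n,r)` edges. -/
theorem removal_to_hom_free {α : Type*} [Fintype α]
    (r : ℕ) (F : Finset (Finset α)) (hF : IsRGraph r F)
    (η₂ : ℝ) (hη₂ : 0 < η₂) :
    ∃ n₀ : ℕ, 0 < n₀ ∧ ∀ n : ℕ, n₀ < n → ∀ G : Finset (Finset (Fin n)),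
      IsRGraph r G → ¬ ContainsCopy F G →
        ∃ G' ⊆ G, ((G \ G').card : ℝ) ≤ η₂ * (n.choose r) ∧ ¬ ContainsHom F G' := by
  obtain ⟨n₀, hn₀, h⟩ := removal_to_hom_free_general (fun e he => (hF e he).le) hη₂
  exact ⟨n₀, hn₀, fun n hn G _ => h n hn G⟩
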